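/- arXiv:2410.11353 — 2 statements merged into one kernel-verified Lean document; each statement's English description precedes it below -/
import Mathlib

section
/- Let p ≥ 5 be a prime and K a field of characteristic p. The polynomial θ_{s,t}(X) of degree (p−1)/2, satisfying θ_{s,t}(x^p) = ψ_{p,s,t}(x) mod p, is irreducible over K(s,t). -/
open WeierstrassCurve Polynomial

/-- The Weierstrass curve `y² = x³ + sx + t` over the polynomial ring `R[s,t]`, where
`s = X 0` and `t = X 1` in `MvPolynomial (Fin 2) R`. -/
noncomputable def Wst (R : Type*) [CommRing R] : WeierstrassCurve (MvPolynomial (Fin 2) R) :=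
  { a₁ := 0, a₂ := 0, a₃ := 0, a₄ := MvPolynomial.X 0, a₆ := MvPolynomial.X 1 }

/-- Short Weierstrass curve. -/
def Wc {R : Type*} [CommRing R] (s t : R) : WeierstrassCurve R := ⟨0, 0, 0, s, t⟩

/-- x-coordinate (zero at infinity). -/
def xco {R : Type*} [CommRing R] {W : WeierstrassCurve R} : Affine.Point W → R
  | .zero => 0
  | .some x _ _ => x

/-- Kummer form. -/
def kum {R : Type*} [CommRing R] (s t a b z : R) : R :=
  z ^ 2 * (a - b) ^ 2 - 2 * z * ((a * b + s) * (a + b) + 2 * t) + (a * b - s) ^ 2 - 4 * t * (a + b)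

section
variable {F : Type*} [Field F] [DecidableEq F] {s t : F}

theorem Wc_eqn {x y : F} : Affine.Equation (Wc s t) x y ↔ y ^ 2 = x ^ 3 + s * x + t := by
  rw [Affine.equation_iff]; simp [Wc]

theorem Wc_negY {x y : F} : Affine.negY (Wc s t) x y = -y := by
  simp [Affine.negY, Wc]

theorem Wc_addX {a b l : F} : Affine.addX (Wc s t) a b l = l ^ 2 - a - b := by
  simp [Affine.addX, Wc]

theorem xco_eq_iff {P Q : Affine.Point (Wc s t)} (hP : P ≠ 0) (hQ : Q ≠ 0) :
    xco P = xco Q ↔ P = Q ∨ P = -Q := by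
  match P, Q, hP, hQ with
  | .some x y h, .some x' y' h', _, _ => exact Affine.Point.X_eq_iff
  | .zero, _, h, _ => exact absurd rfl h
  | .some _ _ _, .zero, _, h => exact absurd rfl h

theorem kummer {P Q : Affine.Point (Wc s t)} (hP : P ≠ 0) (hQ : Q ≠ 0) (hx : xco P ≠ xco Q) (z : F) :
    (xco P - xco Q) ^ 2 * (z - xco (P + Q)) * (z - xco (P - Q)) = kum s t (xco P) (xco Q) z := by
  match P, Q, hP, hQ, hx with
  | .zero, _, h, _, _ => exact absurd rfl h
  | .some _ _ _, .zero, _, h, _ => exact absurd rfl h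
  | .some a y h, .some b w h', _, _, hx =>
    have hx : a ≠ b := hx
    have e1 := Wc_eqn.1 h.1
    have e2 := Wc_eqn.1 h'.1
    rw [sub_eq_add_neg (Affine.Point.some a y h), Affine.Point.neg_some,
      Affine.Point.add_of_X_ne hx, Affine.Point.add_of_X_ne hx]
    simp only [xco, Wc_addX, Affine.slope_of_X_ne hx, Wc_negY, kum]
    have : a - b ≠ 0 := sub_ne_zero.2 hx
    have key : (a - b) ^ 2 * ((a - b) ^ 2 * (z - (((y - w) / (a - b)) ^ 2 - a - b)) *
       (z - (((y - -w) / (a - b)) ^ 2 - a - b))) = (a - b) ^ 2 * kum s t a b z := by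
      have f1 : (a - b) ^ 2 * (z - (((y - w) / (a - b)) ^ 2 - a - b)) =
          (a - b) ^ 2 * (z + a + b) - (y - w) ^ 2 := by field_simp; ring
      have f2 : (a - b) ^ 2 * (z - (((y - -w) / (a - b)) ^ 2 - a - b)) =
          (a - b) ^ 2 * (z + a + b) - (y + w) ^ 2 := by field_simp; ring
      calc _ = ((a - b) ^ 2 * (z - (((y - w) / (a - b)) ^ 2 - a - b))) *
         ((a - b) ^ 2 * (z - (((y - -w) / (a - b)) ^ 2 - a - b))) := by ring
        _ = ((a - b) ^ 2 * (z + a + b)) ^ 2 - 2 * ((a - b) ^ 2 * (z + a + b)) * (y ^ 2 + w ^ 2)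
          + (y ^ 2 - w ^ 2) ^ 2 := by rw [f1, f2]; ring
        _ = _ := by rw [e1, e2, kum]; ring
    exact mul_left_cancel₀ (pow_ne_zero 2 this) key

theorem two_smul_eq (h2 : (2 : F) ≠ 0) {x y : F} (h : Affine.Nonsingular (Wc s t) x y) (hy : y ≠ 0) :
    ∃ (x' y' : F) (h' : Affine.Nonsingular (Wc s t) x' y'),
      Affine.Point.some x y h + Affine.Point.some x y h = Affine.Point.some x' y' h' ∧
      x' = ((3 * x ^ 2 + s) / (2 * y)) ^ 2 - 2 * x ∧
      y' = -(y + (3 * x ^ 2 + s) / (2 * y) * (x' - x)) := by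
  have hy' : y ≠ Affine.negY (Wc s t) x y := by
    rw [Wc_negY]; intro h; apply hy
    have : 2 * y = 0 := by linear_combination h
    simpa [h2] using this
  have hs : Affine.slope (Wc s t) x x y y = (3 * x ^ 2 + s) / (2 * y) := by
    rw [Affine.slope_of_Y_ne rfl hy']
    simp [Wc, Affine.negY]; ring_nf
  refine ⟨_, _, _, Affine.Point.add_self_of_Y_ne hy', ?_, ?_⟩
  · rw [Wc_addX, hs]; ring
  · rw [hs]
    simp [Affine.addY, Affine.negAddY, Affine.negY, Affine.addX, Wc]; ring

end
theorem ell_abstract {F : Type*} [Field F] (W X : ℤ → F) (M : ℤ) (h0 : W 0 = 0)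
    (hnz : ∀ n, 1 ≤ n → n < M → W n ≠ 0)
    (h1 : ∀ n, 1 ≤ n → n + 1 ≤ M → W (n + 1) * W (n - 1) = (X 1 - X n) * W n ^ 2)
    (hK : ∀ n m, 2 ≤ m → m < n → n + m + 1 ≤ M →
      (X n - X m) ^ 2 * (X 1 - X (n + m)) * (X 1 - X (n - m)) =
      (X m - X 1) ^ 2 * (X n - X (m + 1)) * (X n - X (m - 1)))
    (hK1 : ∀ n, 2 ≤ n → n + 2 ≤ M →
      (X n - X 1) ^ 2 * (X 1 - X (n + 1)) * (X 1 - X (n - 1)) = (X 2 - X n) * W 2 ^ 2)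
    (hW1 : W 1 = 1) :
    ∀ k : ℕ, ∀ m n : ℤ, m = k → 1 ≤ m → m ≤ n → n + m ≤ M →
      W (n + m) * W (n - m) = (X m - X n) * W n ^ 2 * W m ^ 2 := by
  intro k
  induction k using Nat.strong_induction_on with
  | _ k ih =>
  intro m n hmk hm hmn hM
  rcases eq_or_lt_of_le hmn with rfl | hlt
  · simp [h0]
  rcases eq_or_lt_of_le hm with rfl | hm2
  · rw [h1 n (by omega) hM, hW1]; ring
  rcases eq_or_lt_of_le (show 2 ≤ m by omega) with rfl | hm3
  · have e1 := h1 (n + 1) (by omega) (by omega)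
    have e2 := h1 (n - 1) (by omega) (by omega)
    have e3 := h1 n (by omega) (by omega)
    have e4 := hK1 n (by omega) (by omega)
    have hn := hnz n (by omega) (by omega)
    rw [show n + 1 + 1 = n + 2 by ring, show n + 1 - 1 = n by ring] at e1
    rw [show n - 1 + 1 = n by ring, show n - 1 - 1 = n - 2 by ring] at e2
    apply mul_right_cancel₀ (pow_ne_zero 2 hn)
    calc W (n + 2) * W (n - 2) * W n ^ 2 = (W (n + 2) * W n) * (W n * W (n - 2)) := by ring
      _ = (X 1 - X (n + 1)) * (X 1 - X (n - 1)) * (W (n + 1) * W (n - 1)) ^ 2 := by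
        rw [e1, e2]; ring
      _ = ((X n - X 1) ^ 2 * (X 1 - X (n + 1)) * (X 1 - X (n - 1))) * W n ^ 4 := by
        rw [e3]; ring
      _ = _ := by rw [e4]; ring
  · obtain ⟨l, rfl⟩ : ∃ l, m = l + 1 := ⟨m - 1, by ring⟩
    have E1 := ih (k - 1) (by omega) l n (by omega) (by omega) (by omega) (by omega)
    have E2 := ih (k - 2) (by omega) (l - 1) n (by omega) (by omega) (by omega) (by omega)
    have e1 := h1 (n + l) (by omega) (by omega)
    have e2 := h1 (n - l) (by omega) (by omega)
    have e3 := h1 l (by omega) (by omega)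
    have e4 := hK n l (by omega) (by omega) (by omega)
    rw [show n + (l - 1) = n + l - 1 by ring, show n - (l - 1) = n - l + 1 by ring] at E2
    rw [show n + (l + 1) = n + l + 1 by ring, show n - (l + 1) = n - l - 1 by ring]
    have n1 := hnz (n + l - 1) (by omega) (by omega)
    have n2 := hnz (n - l + 1) (by omega) (by omega)
    apply mul_right_cancel₀ (mul_ne_zero n1 n2)
    calc W (n + l + 1) * W (n - l - 1) * (W (n + l - 1) * W (n - l + 1))
        = (W (n + l + 1) * W (n + l - 1)) * (W (n - l + 1) * W (n - l - 1)) := by ring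
      _ = (X 1 - X (n + l)) * (X 1 - X (n - l)) * (W (n + l) * W (n - l)) ^ 2 := by
        rw [e1, e2]; ring
      _ = ((X n - X l) ^ 2 * (X 1 - X (n + l)) * (X 1 - X (n - l)))
          * W n ^ 4 * W l ^ 4 := by rw [E1]; ring
      _ = (X n - X (l + 1)) * (X n - X (l - 1)) * W n ^ 4 * ((X 1 - X l) * W l ^ 2) ^ 2 := by
        rw [e4]; ring
      _ = _ := by rw [E2, ← e3]; ring

/-- Third division value. -/
def cc {R : Type*} [CommRing R] (s t x : R) : R := 3 * x ^ 4 + 6 * s * x ^ 2 + 12 * t * x - s ^ 2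

/-- Fourth division value. -/
def dd {R : Type*} [CommRing R] (s t x : R) : R :=
  2 * x ^ 6 + 10 * s * x ^ 4 + 40 * t * x ^ 3 - 10 * s ^ 2 * x ^ 2 - 8 * s * t * x - 2 * s ^ 3
    - 16 * t ^ 2

/-- The elliptic sequence at a point. -/
def Wn {R : Type*} [CommRing R] (s t x y : R) (n : ℤ) : R :=
  normEDS (2 * y) (cc s t x) (dd s t x) n

section
variable {F : Type*} [Field F] [DecidableEq F] {s t : F}

theorem small3 (h2 : (2 : F) ≠ 0) {x y : F} (h : Affine.Nonsingular (Wc s t) x y) (hy : y ≠ 0) :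
    cc s t x = (x - xco ((2 : ℤ) • Affine.Point.some x y h)) * (2 * y) ^ 2 := by
  have e := Wc_eqn.1 h.1
  obtain ⟨x', y', h', e1, e2, e3⟩ := two_smul_eq h2 h hy
  rw [two_zsmul, e1]
  simp only [xco]
  rw [e2, cc]
  field_simp
  linear_combination (-12 * x) * e

theorem dd_eq {x y : F} (e : y ^ 2 = x ^ 3 + s * x + t) :
    dd s t x = 2 * (3 * x ^ 2 + s) * cc s t x - 16 * y ^ 4 := by
  rw [show y ^ 4 = (y ^ 2) ^ 2 by ring, e, cc, dd]; ring

theorem dup_kum (h2 : (2 : F) ≠ 0) {x y : F} (h : Affine.Nonsingular (Wc s t) x y) (hy : y ≠ 0) (X : F) :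
    (xco ((2 : ℤ) • Affine.Point.some x y h) - X) * (2 * y) ^ 2 = kum s t X x x := by
  have e := Wc_eqn.1 h.1
  obtain ⟨x', y', h', e1, e2, e3⟩ := two_smul_eq h2 h hy
  rw [two_zsmul, e1]
  simp only [xco]
  rw [e2, kum]
  field_simp
  linear_combination (-8 * x - 4 * X) * e

theorem small4 (h2 : (2 : F) ≠ 0) {x y : F} (h : Affine.Nonsingular (Wc s t) x y) (hy : y ≠ 0)
    (hx : xco ((2 : ℤ) • Affine.Point.some x y h) ≠ x) :
    dd s t x * (2 * y) * (2 * y) = (x - xco ((3 : ℤ) • Affine.Point.some x y h)) * cc s t x ^ 2 := by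
  have e := Wc_eqn.1 h.1
  have e0 := small3 h2 h hy
  have ed := dd_eq (s := s) (t := t) e
  obtain ⟨x', y', h', e1, e2, e3⟩ := two_smul_eq h2 h hy
  rw [show (3 : ℤ) = 2 + 1 by norm_num, add_zsmul, one_zsmul]
  rw [two_zsmul, e1] at e0 hx ⊢
  simp only [xco] at e0 hx
  rw [Affine.Point.add_of_X_ne hx]
  simp only [xco, Wc_addX, Affine.slope_of_X_ne hx]
  have hx' : x' - x ≠ 0 := sub_ne_zero.2 hx
  have e' := Wc_eqn.1 h'.1
  have f1 : (x - (((y' - y) / (x' - x)) ^ 2 - x' - x)) * (x' - x) ^ 2 = 4 * y * y' := by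
    field_simp
    have : (2 * y) ^ 2 * (x' + 2 * x) = (3 * x ^ 2 + s) ^ 2 := by rw [e2]; field_simp; ring
    have g : 2 * y * (y' + y) = - (3 * x ^ 2 + s) * (x' - x) := by rw [e3]; field_simp; ring
    have k1 : (2 * y) ^ 2 * ((y' + y) ^ 2) = (2 * y) ^ 2 * ((x' + 2 * x) * (x' - x) ^ 2) := by
      rw [← mul_pow, g, ← mul_assoc, this]; ring
    have k2 := mul_left_cancel₀ (pow_ne_zero 2 (mul_ne_zero h2 hy)) k1
    linear_combination -k2
  have f2 : dd s t x = 16 * y ^ 3 * y' := by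
    have g : 2 * y * (y' + y) = - (3 * x ^ 2 + s) * (x' - x) := by rw [e3]; field_simp; ring
    rw [ed, e0]; linear_combination (-8 * y ^ 2) * g
  rw [f2, e0]
  linear_combination (-16 * y ^ 4) * f1

variable {x y : F}

theorem zsmul_x_ne {P : Affine.Point (Wc s t)} {a b : ℤ} (ha : a • P ≠ 0) (hb : b • P ≠ 0)
    (h1 : (a - b) • P ≠ 0) (h2 : (a + b) • P ≠ 0) : xco (a • P) ≠ xco (b • P) := by
  rw [Ne, xco_eq_iff ha hb]
  rintro (h | h)
  · exact h1 (by rw [sub_zsmul, h]; simp)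
  · exact h2 (by rw [add_zsmul, h]; simp)

theorem y_ne_zero_of (h2 : (2 : F) ≠ 0) (h : Affine.Nonsingular (Wc s t) x y)
    (hk : (2 : ℤ) • Affine.Point.some x y h ≠ 0) : y ≠ 0 := by
  rintro rfl
  apply hk
  rw [two_zsmul, add_eq_zero_iff_eq_neg, Affine.Point.neg_some]
  simp [Wc]

theorem E_of_h1 (h2 : (2 : F) ≠ 0) (h : Affine.Nonsingular (Wc s t) x y) (W : ℤ → F) (M : ℤ)
    (hP : ∀ k : ℤ, 1 ≤ k → k < M → k • Affine.Point.some x y h ≠ 0)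
    (hw0 : W 0 = 0) (hw1 : W 1 = 1) (hw2 : W 2 = 2 * y)
    (hnz : ∀ n, 1 ≤ n → n < M → W n ≠ 0)
    (h1 : ∀ n, 1 ≤ n → n + 1 ≤ M → W (n + 1) * W (n - 1) =
      (x - xco (n • Affine.Point.some x y h)) * W n ^ 2) (m n : ℤ) (hm : 1 ≤ m) (hmn : m ≤ n)
    (hM : n + m ≤ M) : W (n + m) * W (n - m) = (xco (m • Affine.Point.some x y h) -
      xco (n • Affine.Point.some x y h)) * W n ^ 2 * W m ^ 2 := by
  set P := Affine.Point.some x y h with hPdef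
  have hx1 : xco ((1 : ℤ) • P) = x := by rw [one_zsmul, hPdef]; rfl
  refine ell_abstract W (fun n => xco (n • P)) M hw0 hnz ?_ ?_ ?_ hw1 m.toNat m n (by omega) hm hmn hM
  · simpa only [hx1] using h1
  · intro n m hm hmn hM
    have k1 := kummer (hP n (by omega) (by omega)) (hP m (by omega) (by omega))
      (zsmul_x_ne (hP n (by omega) (by omega)) (hP m (by omega) (by omega))
        (hP _ (by omega) (by omega)) (hP _ (by omega) (by omega))) (xco ((1 : ℤ) • P))
    have k2 := kummer (hP m (by omega) (by omega)) (hP 1 (by omega) (by omega))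
      (zsmul_x_ne (hP m (by omega) (by omega)) (hP 1 (by omega) (by omega))
        (hP _ (by omega) (by omega)) (hP _ (by omega) (by omega))) (xco (n • P))
    rw [add_zsmul, sub_zsmul, add_zsmul, sub_zsmul, ← sub_eq_add_neg, ← sub_eq_add_neg, k1, k2]
    simp only [kum]; ring
  · intro n hn hM
    have hy := y_ne_zero_of h2 h (hP 2 (by omega) (by omega))
    have k1 := kummer (hP n (by omega) (by omega)) (hP 1 (by omega) (by omega))
      (zsmul_x_ne (hP n (by omega) (by omega)) (hP 1 (by omega) (by omega))
        (hP _ (by omega) (by omega)) (hP _ (by omega) (by omega))) (xco ((1 : ℤ) • P))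
    rw [add_zsmul, sub_zsmul, ← sub_eq_add_neg, k1, hw2, hx1, dup_kum h2 h hy]

theorem window (h2 : (2 : F) ≠ 0) (h : Affine.Nonsingular (Wc s t) x y) (M : ℕ)
    (hP : ∀ k : ℤ, 1 ≤ k → k < M → k • Affine.Point.some x y h ≠ 0) :
    (∀ n, 1 ≤ n → n < (M : ℤ) → Wn s t x y n ≠ 0) ∧
    (∀ n, 1 ≤ n → n + 1 ≤ (M : ℤ) → Wn s t x y (n + 1) * Wn s t x y (n - 1) =
      (x - xco (n • Affine.Point.some x y h)) * Wn s t x y n ^ 2) := by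
  have w0 : Wn s t x y 0 = 0 := by simp [Wn]
  have w1 : Wn s t x y 1 = 1 := by simp [Wn]
  have w2 : Wn s t x y 2 = 2 * y := by simp [Wn]
  have w3 : Wn s t x y 3 = cc s t x := by simp [Wn]
  have w4 : Wn s t x y 4 = dd s t x * (2 * y) := by simp [Wn]
  have hx1 : xco ((1 : ℤ) • Affine.Point.some x y h) = x := by rw [one_zsmul]; rfl
  have H4 : ∀ M : ℤ, M ≤ 4 → (∀ k : ℤ, 1 ≤ k → k < M → k • Affine.Point.some x y h ≠ 0) →
    (∀ n, 1 ≤ n → n < (M : ℤ) → Wn s t x y n ≠ 0) ∧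
    (∀ n, 1 ≤ n → n + 1 ≤ (M : ℤ) → Wn s t x y (n + 1) * Wn s t x y (n - 1) =
      (x - xco (n • Affine.Point.some x y h)) * Wn s t x y n ^ 2) := by
    intro M hM hP
    have hxne : 4 ≤ M → xco ((2 : ℤ) • Affine.Point.some x y h) ≠ x := by
      intro h4
      refine fun hh => absurd (hh.trans hx1.symm) ?_
      exact zsmul_x_ne (hP _ (by omega) (by omega)) (hP _ (by omega) (by omega))
        (hP _ (by omega) (by omega)) (hP _ (by omega) (by omega))
    constructor
    · intro n hn hnM
      have : n = 1 ∨ n = 2 ∨ n = 3 := by omega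
      rcases this with rfl | rfl | rfl
      · rw [w1]; exact one_ne_zero
      · rw [w2]; exact mul_ne_zero h2 (y_ne_zero_of h2 h (hP 2 (by omega) (by omega)))
      · have hy := y_ne_zero_of h2 h (hP 2 (by omega) (by omega))
        rw [w3, small3 h2 h hy]
        exact mul_ne_zero (sub_ne_zero.2 (hxne (by omega)).symm) (pow_ne_zero _ (mul_ne_zero h2 hy))
    · intro n hn hnM
      have : n = 1 ∨ n = 2 ∨ n = 3 := by omega
      rcases this with rfl | rfl | rfl
      · rw [hx1, sub_self, w0]; ring
      · have hy := y_ne_zero_of h2 h (hP 2 (by omega) (by omega))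
        norm_num only [w3, w1, w2]
        rw [small3 h2 h hy]; ring
      · have hy := y_ne_zero_of h2 h (hP 2 (by omega) (by omega))
        norm_num only [w3, w4, w2]
        rw [small4 h2 h hy (hxne (by omega))]
  induction M with
  | zero => exact H4 0 (by norm_num) (by simpa using hP)
  | succ M ih =>
    by_cases hM : (M + 1 : ℤ) ≤ 4
    · have := H4 (M + 1) hM (by simpa using hP)
      simpa using this
    push_cast at hP ⊢
    obtain ⟨hnz, h1⟩ := ih (fun k hk hkM => hP k hk (by omega))
    have hwM : Wn s t x y M ≠ 0 := by
      have e := h1 (M - 1) (by omega) (by omega)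
      have hne : xco ((M - 1 : ℤ) • Affine.Point.some x y h) ≠ xco ((1 : ℤ) • Affine.Point.some x y h) :=
        zsmul_x_ne (hP _ (by omega) (by omega)) (hP _ (by omega) (by omega))
          (hP _ (by omega) (by omega)) (hP _ (by omega) (by omega))
      rw [hx1] at hne
      rw [show (M - 1 + 1 : ℤ) = M by ring] at e
      intro h0
      rw [h0, zero_mul] at e
      exact mul_ne_zero (sub_ne_zero.2 hne.symm) (pow_ne_zero 2 (hnz _ (by omega) (by omega))) e.symm
    have hnz' : ∀ n, 1 ≤ n → n < (M + 1 : ℤ) → Wn s t x y n ≠ 0 := by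
      intro n hn hn'
      rcases eq_or_lt_of_le (show n ≤ M by omega) with rfl | hlt
      · exact hwM
      · exact hnz n hn hlt
    refine ⟨hnz', ?_⟩
    set V : ℤ → F := fun n => if n = M + 1 then
      (x - xco ((M : ℤ) • Affine.Point.some x y h)) * Wn s t x y M ^ 2 / Wn s t x y (M - 1)
      else Wn s t x y n with hV
    have hVn : ∀ n : ℤ, n ≠ M + 1 → V n = Wn s t x y n := by
      intro n hn; simp [hV, hn]
    have hVM : V (M + 1) * Wn s t x y (M - 1) =
        (x - xco ((M : ℤ) • Affine.Point.some x y h)) * Wn s t x y M ^ 2 := by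
      simp only [hV, if_true]
      exact div_mul_cancel₀ _ (hnz _ (by omega) (by omega))
    have EV := E_of_h1 h2 h V (M + 1) hP (by rw [hVn _ (by omega), w0]) (by rw [hVn _ (by omega), w1])
      (by rw [hVn _ (by omega), w2])
      (by intro n hn hn'; rw [hVn _ (by omega)]; exact hnz' n hn hn')
      (by
        intro n hn hn'
        rcases eq_or_lt_of_le (show n ≤ M by omega) with rfl | hlt
        · rw [hVn (M - 1) (by omega), hVn M (by omega)]; exact hVM
        · rw [hVn _ (by omega), hVn _ (by omega), hVn _ (by omega)]
          exact h1 n hn (by omega))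
    have key : V (M + 1) = Wn s t x y (M + 1) := by
      obtain ⟨k, hk⟩ | ⟨k, hk⟩ := Int.even_or_odd (M + 1 : ℤ)
      · have E1 := EV (k - 1) (k + 1) (by omega) (by omega) (by omega)
        rw [show k + 1 + (k - 1) = M + 1 by omega, show k + 1 - (k - 1) = 2 by ring,
          hVn 2 (by omega), hVn (k + 1) (by omega), hVn (k - 1) (by omega), w2] at E1
        have E2 := normEDS_even (2 * y) (cc s t x) (dd s t x) k
        rw [show 2 * k = M + 1 by omega] at E2
        simp only [← Wn.eq_1] at E2
        have g1 := h1 (k + 1) (by omega) (by omega)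
        have g2 := h1 (k - 1) (by omega) (by omega)
        rw [show k + 1 + 1 = k + 2 by ring, show k + 1 - 1 = k by ring] at g1
        rw [show k - 1 + 1 = k by ring, show k - 1 - 1 = k - 2 by ring] at g2
        have hy : 2 * y ≠ 0 := w2 ▸ hnz 2 (by omega) (by omega)
        apply mul_right_cancel₀ hy
        linear_combination E1 - E2 - Wn s t x y (k - 1) ^ 2 * g1 + Wn s t x y (k + 1) ^ 2 * g2
      · have E1 := EV k (k + 1) (by omega) (by omega) (by omega)
        rw [show k + 1 + k = M + 1 by omega, show k + 1 - k = 1 by ring,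
          hVn 1 (by omega), hVn (k + 1) (by omega), hVn k (by omega), w1] at E1
        have E2 := normEDS_odd (2 * y) (cc s t x) (dd s t x) k
        rw [show 2 * k + 1 = M + 1 by omega] at E2
        simp only [← Wn.eq_1] at E2
        have g1 := h1 (k + 1) (by omega) (by omega)
        have g2 := h1 k (by omega) (by omega)
        rw [show k + 1 + 1 = k + 2 by ring, show k + 1 - 1 = k by ring] at g1
        linear_combination E1 - E2 - Wn s t x y k ^ 2 * g1 + Wn s t x y (k + 1) ^ 2 * g2
    intro n hn hn'
    rcases eq_or_lt_of_le (show n ≤ M by omega) with rfl | hlt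
    · rw [← key]; exact hVM
    · exact h1 n hn (by omega)
end

section
variable {F : Type*} [Field F] [DecidableEq F] {s t x y : F}

theorem Wn_order (h2 : (2 : F) ≠ 0) (h : Affine.Nonsingular (Wc s t) x y) (r : ℕ) (hr1 : 1 ≤ r)
    (hr : (r : ℤ) • Affine.Point.some x y h = 0)
    (hP : ∀ k : ℤ, 1 ≤ k → k < r → k • Affine.Point.some x y h ≠ 0) :
    2 ≤ r ∧ Wn s t x y r = 0 := by
  have hr2 : 2 ≤ r := by
    by_contra hlt
    obtain rfl : r = 1 := by omega
    simp at hr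
  refine ⟨hr2, ?_⟩
  obtain ⟨hnz, h1⟩ := window h2 h r hP
  have hx : xco ((r - 1 : ℤ) • Affine.Point.some x y h) = x := by
    rw [sub_zsmul, hr, one_zsmul, zero_add, Affine.Point.neg_some]; rfl
  rcases eq_or_lt_of_le hr2 with rfl | hr3
  · have : y = 0 := by
      have e : Affine.Point.some x y h = - Affine.Point.some x y h := by
        rw [← add_eq_zero_iff_eq_neg, ← two_zsmul]; exact_mod_cast hr
      rw [Affine.Point.neg_some] at e
      have e2 := (Affine.Point.some.inj e).2
      rw [Wc_negY] at e2
      have : 2 * y = 0 := by linear_combination e2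
      simpa [h2] using this
    simp [Wn, this]
  · have e := h1 (r - 1) (by omega) (by omega)
    rw [hx, sub_self, zero_mul, sub_add_cancel] at e
    rcases mul_eq_zero.1 e with e | e
    · exact e
    · exact absurd e (hnz _ (by omega) (by omega))
end

theorem normEDS_id (n : ℕ) : normEDS (2 : ℤ) 3 2 n = n := by
  induction n using normEDSRec' with
  | zero => simp
  | one => simp
  | two => simp
  | three => simp
  | four => simp
  | even m ih =>
    have e := normEDS_even (2 : ℤ) 3 2 (m + 3)
    have f1 := ih (m + 2) (by omega)
    have f2 := ih (m + 3) (by omega)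
    have f3 := ih (m + 5) (by omega)
    have f4 := ih (m + 1) (by omega)
    have f5 := ih (m + 4) (by omega)
    push_cast at *
    rw [show (m + 3 - 1 : ℤ) = m + 2 by ring, show (m + 3 + 2 : ℤ) = m + 5 by ring,
      show (m + 3 - 2 : ℤ) = m + 1 by ring, show (m + 3 + 1 : ℤ) = m + 4 by ring, f1, f2, f3, f4, f5] at e
    have : (2 : ℤ) ≠ 0 := two_ne_zero
    apply mul_right_cancel₀ this
    rw [e]; ring
  | odd m ih =>
    have e := normEDS_odd (2 : ℤ) 3 2 (m + 2)
    have f1 := ih (m + 4) (by omega)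
    have f2 := ih (m + 2) (by omega)
    have f3 := ih (m + 1) (by omega)
    have f4 := ih (m + 3) (by omega)
    push_cast at *
    rw [show (m + 2 - 1 : ℤ) = m + 1 by ring, show (m + 2 + 2 : ℤ) = m + 4 by ring,
      show (m + 2 + 1 : ℤ) = m + 3 by ring, f1, f2, f3, f4] at e
    rw [e]; ring

theorem map_Wn {R S : Type*} [CommRing R] [CommRing S] (f : R →+* S) (s t x y : R) (n : ℤ) :
    f (Wn s t x y n) = Wn (f s) (f t) (f x) (f y) n := by
  simp only [Wn, map_normEDS, cc, dd, map_sub, map_add, map_mul, map_pow, map_ofNat]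

theorem Wn_univ (m n : ℤ) (hm : 1 ≤ m) (hmn : m ≤ n) :
    ∀ {R : Type*} [CommRing R] (s t x y : R), y ^ 2 = x ^ 3 + s * x + t →
    Wn s t x y (n + m) * Wn s t x y (n - m) =
      Wn s t x y (n + 1) * Wn s t x y (n - 1) * Wn s t x y m ^ 2
      - Wn s t x y (m + 1) * Wn s t x y (m - 1) * Wn s t x y n ^ 2 := by
  classical
  let R0 := MvPolynomial (Fin 3) ℤ
  let s0 : R0 := MvPolynomial.X 0
  let x0 : R0 := MvPolynomial.X 1
  let y0 : R0 := MvPolynomial.X 2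
  let t0 : R0 := y0 ^ 2 - x0 ^ 3 - s0 * x0
  have key : Wn s0 t0 x0 y0 (n + m) * Wn s0 t0 x0 y0 (n - m) =
      Wn s0 t0 x0 y0 (n + 1) * Wn s0 t0 x0 y0 (n - 1) * Wn s0 t0 x0 y0 m ^ 2
      - Wn s0 t0 x0 y0 (m + 1) * Wn s0 t0 x0 y0 (m - 1) * Wn s0 t0 x0 y0 n ^ 2 := by
    let F0 := FractionRing R0
    let φ : R0 →+* F0 := algebraMap R0 F0
    have hφ : Function.Injective φ := IsFractionRing.injective R0 F0
    have h2 : (2 : F0) ≠ 0 := two_ne_zero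
    have hy0 : φ y0 ≠ 0 := by
      rw [Ne, map_eq_zero_iff φ hφ]; exact MvPolynomial.X_ne_zero _
    have heq : Affine.Equation (Wc (φ s0) (φ t0)) (φ x0) (φ y0) := by
      rw [Wc_eqn, ← map_pow, ← map_pow, ← map_mul, ← map_add, ← map_add]
      congr 1; simp only [t0]; ring
    have h : Affine.Nonsingular (Wc (φ s0) (φ t0)) (φ x0) (φ y0) := by
      rw [Affine.nonsingular_iff]
      refine ⟨heq, Or.inr ?_⟩
      simp only [Wc]
      intro h
      have : 2 * φ y0 = 0 := by linear_combination h
      exact mul_ne_zero h2 hy0 this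
    have hP : ∀ k : ℕ, 1 ≤ k → (k : ℤ) • Affine.Point.some _ _ h ≠ 0 := by
      intro k hk hk0
      have hex : ∃ k : ℕ, 1 ≤ k ∧ (k : ℤ) • Affine.Point.some _ _ h = 0 := ⟨k, hk, hk0⟩
      obtain ⟨hr1, hr0⟩ := Nat.find_spec hex
      have := (Wn_order h2 h (Nat.find hex) hr1 hr0 (by
        intro j hj hjr hj0
        lift j to ℕ using by omega
        exact Nat.find_min hex (by exact_mod_cast hjr) ⟨by omega, hj0⟩)).2
      rw [← map_Wn, map_eq_zero_iff φ hφ] at this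
      have h3 := congrArg (MvPolynomial.eval (![0, 1, 1] : Fin 3 → ℤ)) this
      rw [map_Wn, map_zero] at h3
      simp only [s0, t0, x0, y0, map_sub, map_mul, map_pow, MvPolynomial.eval_X] at h3
      have h4 := normEDS_id (Nat.find hex)
      have h5 : ((Nat.find hex : ℕ) : ℤ) = 0 := by
        rw [← h4, ← h3, Wn]
        simp [cc, dd]
      omega
    have hP' : ∀ k : ℤ, 1 ≤ k → k < ((n + m + 2).toNat : ℤ) → k • Affine.Point.some _ _ h ≠ 0 := by
      intro k hk _
      lift k to ℕ using by omega
      exact hP k (by omega)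
    obtain ⟨hnz, h1⟩ := window h2 h _ hP'
    have E := E_of_h1 h2 h (Wn (φ s0) (φ t0) (φ x0) (φ y0)) _ hP' (by simp [Wn]) (by simp [Wn]) (by simp [Wn])
      hnz h1 m n hm hmn (by omega)
    have g1 := h1 n (by omega) (by omega)
    have g2 := h1 m (by omega) (by omega)
    apply hφ
    simp only [map_sub, map_mul, map_pow, map_Wn]
    rw [E, g1, g2]; ring
  intro R _ s t x y hxy
  have h3 := congrArg (MvPolynomial.eval₂Hom (Int.castRingHom R) (![s, x, y] : Fin 3 → R)) key
  have ht : (MvPolynomial.eval₂Hom (Int.castRingHom R) (![s, x, y] : Fin 3 → R)) t0 = t := by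
    simp only [s0, t0, x0, y0, map_sub, map_mul, map_pow, MvPolynomial.eval₂Hom_X']
    simp [hxy]
    ring
  simp only [map_sub, map_mul, map_pow, map_Wn] at h3
  rw [ht] at h3
  simpa only [s0, x0, y0, MvPolynomial.eval₂Hom_X', Matrix.cons_val_zero, Matrix.cons_val_one, Matrix.cons_val] using h3

theorem Wn_univ' {R : Type*} [CommRing R] {s t x y : R} (e : y ^ 2 = x ^ 3 + s * x + t) (m n : ℤ)
    (hm : 1 ≤ m) (hn : 1 ≤ n) :
    Wn s t x y (n + m) * Wn s t x y (n - m) =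
      Wn s t x y (n + 1) * Wn s t x y (n - 1) * Wn s t x y m ^ 2
      - Wn s t x y (m + 1) * Wn s t x y (m - 1) * Wn s t x y n ^ 2 := by
  rcases le_total m n with h | h
  · exact Wn_univ m n hm h s t x y e
  · have := Wn_univ n m hn h s t x y e
    have e2 : Wn s t x y (n - m) = - Wn s t x y (m - n) := by
      rw [← neg_sub, Wn, normEDS_neg]; rfl
    rw [e2, add_comm n m]
    linear_combination -this

section
variable {F : Type*} [Field F] [DecidableEq F] {s t x y : F}

theorem eval_preΨ (e : y ^ 2 = x ^ 3 + s * x + t) (n : ℤ) (hn : Odd n) :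
    ((Wc s t).preΨ n).eval x = Wn s t x y n := by
  rw [WeierstrassCurve.preΨ, ← coe_evalRingHom, map_preNormEDS, Wn, normEDS,
    if_neg (Int.not_even_iff_odd.2 hn), mul_one]
  congr 1
  · simp [WeierstrassCurve.Ψ₂Sq, Wc, WeierstrassCurve.b₂, WeierstrassCurve.b₄, WeierstrassCurve.b₆]
    rw [show (2 * y) ^ 4 = (4 * y ^ 2) ^ 2 by ring, e]; ring
  · simp [WeierstrassCurve.Ψ₃, Wc, WeierstrassCurve.b₂, WeierstrassCurve.b₄, WeierstrassCurve.b₆,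
      WeierstrassCurve.b₈, cc]; ring
  · simp [WeierstrassCurve.preΨ₄, Wc, WeierstrassCurve.b₂, WeierstrassCurve.b₄, WeierstrassCurve.b₆,
      WeierstrassCurve.b₈, dd]; ring

theorem torsion_of_root (h2 : (2 : F) ≠ 0) (h : Affine.Nonsingular (Wc s t) x y) (p : ℕ)
    (hp : p.Prime) (hp2 : Odd p) (h0 : ((Wc s t).preΨ p).eval x = 0) :
    p • Affine.Point.some x y h = 0 := by
  have e := Wc_eqn.1 h.1
  rw [eval_preΨ e _ (by exact_mod_cast hp2)] at h0
  set P := Affine.Point.some x y h with hPd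
  have hx1 : xco ((1 : ℤ) • P) = x := by rw [one_zsmul]; rfl
  have hex : ∃ k : ℕ, 1 ≤ k ∧ (k : ℤ) • P = 0 := by
    by_contra hno
    push Not at hno
    refine (window h2 h (p + 1) ?_).1 p ?_ ?_ h0
    · intro k hk _
      lift k to ℕ using by omega
      exact hno k (by omega)
    · exact_mod_cast hp.one_le
    · push_cast; omega
  obtain ⟨hr1, hr0⟩ := Nat.find_spec hex
  set r := Nat.find hex with hr
  have hP : ∀ k : ℤ, 1 ≤ k → k < r → k • P ≠ 0 := by
    intro j hj hjr hj0
    lift j to ℕ using by omega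
    exact Nat.find_min hex (by exact_mod_cast hjr) ⟨by omega, hj0⟩
  obtain ⟨hr2, hwr⟩ := Wn_order h2 h r hr1 hr0 hP
  obtain ⟨hnz, h1⟩ := window h2 h r hP
  have hx : xco ((r - 1 : ℤ) • P) = x := by
    rw [sub_zsmul, hr0, one_zsmul, zero_add, hPd, Affine.Point.neg_some]; rfl
  have hw1 : Wn s t x y (r + 1) ≠ 0 := by
    have hc : r = 2 ∨ r = 3 ∨ 4 ≤ r := by omega
    rcases hc with h' | h' | h'
    · rw [h'] at hwr ⊢
      have hy : y = 0 := by
        have : 2 * y = 0 := by simpa [Wn] using hwr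
        simpa [h2] using this
      have : Wn s t x y ((2 : ℕ) + 1) = cc s t x := by norm_num [Wn]
      rw [this]
      have e2 : cc s t x = -(3 * x ^ 2 + s) ^ 2 := by
        rw [cc]; rw [hy] at e; linear_combination (-12 * x) * e
      rw [e2, neg_ne_zero]
      apply pow_ne_zero
      rcases ((Affine.nonsingular_iff _ _).1 h).2 with h'' | h''
      · intro h3; apply h''; simp only [Wc]; linear_combination -h3
      · exact absurd (by simp [Wc, hy]) h''
    · rw [h'] at hwr ⊢ hnz
      have hc : cc s t x = 0 := by simpa [Wn] using hwr
      have hy : 2 * y ≠ 0 := by simpa [Wn] using hnz 2 (by norm_num) (by norm_num)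
      have : Wn s t x y ((3 : ℕ) + 1) = dd s t x * (2 * y) := by norm_num [Wn]
      rw [this, dd_eq e, hc]
      have : (2 * (3 * x ^ 2 + s) * 0 - 16 * y ^ 4) * (2 * y) = - (2 * y) ^ 5 := by ring
      rw [this, neg_ne_zero]
      exact pow_ne_zero _ hy
    · have E := Wn_univ' e 2 (r - 1) (by omega) (by omega)
      have g1 := h1 (r - 1) (by omega) (by omega)
      have g2 := h1 2 (by omega) (by omega)
      rw [g1, g2, hx, show (r - 1 + 2 : ℤ) = r + 1 by ring] at E
      intro h0
      rw [h0] at E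
      have hne : xco ((2 : ℤ) • P) ≠ xco ((1 : ℤ) • P) :=
        zsmul_x_ne (hP _ (by omega) (by omega)) (hP _ (by omega) (by omega))
          (hP _ (by omega) (by omega)) (hP _ (by omega) (by omega))
      rw [hx1] at hne
      have : (x - xco ((2 : ℤ) • P)) * Wn s t x y 2 ^ 2 * Wn s t x y (r - 1) ^ 2 = 0 := by
        linear_combination E
      have n1 := hnz 2 (by omega) (by omega)
      have n2 := hnz (r - 1) (by omega) (by omega)
      simp [n1, n2, sub_eq_zero, hne.symm] at this
  have hdesc : ∀ N : ℕ, 1 ≤ N → Wn s t x y N = 0 → r ∣ N := by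
    intro N
    induction N using Nat.strong_induction_on with
    | _ N ih =>
    intro hN hN0
    rcases lt_trichotomy N r with hlt | rfl | hgt
    · exact absurd hN0 (hnz N (by omega) (by omega))
    · exact dvd_rfl
    · have E := Wn_univ' e r (N - r) (by omega) (by omega)
      rw [sub_add_cancel, hN0, hwr] at E
      have : Wn s t x y (r + 1) * Wn s t x y (r - 1) * Wn s t x y (N - r) ^ 2 = 0 := by
        linear_combination E
      have n2 := hnz (r - 1) (by omega) (by omega)
      simp only [mul_eq_zero, hw1, n2, false_or, pow_eq_zero_iff two_ne_zero] at this
      have hd := ih (N - r) (by omega) (by omega) (by rw [Nat.cast_sub hgt.le]; exact this)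
      exact (Nat.dvd_sub_iff_left hgt.le dvd_rfl).1 hd
  have hrp := hdesc p hp.one_le h0
  rcases (Nat.dvd_prime hp).1 hrp with h' | h'
  · omega
  · rw [← h', ← natCast_zsmul]; exact hr0
end

section
variable {k : Type*} [Field k] (p : ℕ) [Fact p.Prime] [CharP k p]

theorem deriv_pow_char (D : k[X] →ₗ[k] k[X]) (hD : ∀ a b, D (a * b) = a * D b + D a * b) (a b : k[X]) :
    (D ^ p) (a * b) = a * (D ^ p) b + (D ^ p) a * b := by
  let E := Module.End k k[X]
  let M : k[X] → E := fun a => LinearMap.mulLeft k a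
  let L : Module.End k E := LinearMap.mulLeft k (D : E)
  let R : Module.End k E := LinearMap.mulRight k (D : E)
  have hLR : Commute L R := LinearMap.commute_mulLeft_right _ _
  have : CharP (Module.End k E) p :=
    charP_of_injective_algebraMap (FaithfulSMul.algebraMap_injective k (Module.End k E)) p
  have h1 : (L - R) ^ p = L ^ p - R ^ p := by
    exact sub_pow_char_of_commute (R := Module.End k E) (p := p) hLR
  have h2 : ∀ n : ℕ, ((L - R) ^ n) (M a) = M ((D ^ n) a) := by
    intro n
    induction n with
    | zero => simp
    | succ n ih =>
      rw [pow_succ', Module.End.mul_apply, ih, pow_succ', Module.End.mul_apply]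
      refine LinearMap.ext fun c => ?_
      change D (((D ^ n) a) * c) - ((D ^ n) a) * D c = D ((D ^ n) a) * c
      rw [hD]; ring
  have h3 := h2 p
  rw [h1] at h3
  have h4 := LinearMap.congr_fun h3 b
  rw [LinearMap.pow_mulLeft, LinearMap.pow_mulRight] at h4
  change (D ^ p) (a * b) - a * (D ^ p) b = (D ^ p) a * b at h4
  linear_combination h4

theorem deriv_pow_char_apply (D : k[X] →ₗ[k] k[X]) (hD : ∀ a b, D (a * b) = a * D b + D a * b)
    (F : k[X]) : (D ^ p) F = derivative F * (D ^ p) X := by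
  let Δ : Derivation k k[X] k[X] := Derivation.mk' (D ^ p) (by
    intro a b; rw [deriv_pow_char p D hD, smul_eq_mul, smul_eq_mul]; ring)
  have h1 : Δ = mkDerivation k (Δ X) := derivation_ext (by rw [mkDerivation_X])
  have h2 : Δ F = mkDerivation k (Δ X) F := by rw [← h1]
  rw [mkDerivation_apply] at h2
  exact h2

theorem ode_contra (m : ℕ) (hm : 2 * m + 1 = p) (hm1 : 1 ≤ m) (f F A : k[X]) (κ : k) (hf : f ≠ 0)
    (hF : derivative F = f ^ m) (hA : A ≠ 0) (hκ : κ ≠ 0)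
    (hode : 2 * f * derivative (derivative A) + derivative f * derivative A = 2 * C κ * A) : False := by
  let w : k[X] := (f ^ m) ^ (p - 1)
  let D : k[X] →ₗ[k] k[X] := (LinearMap.mulLeft k w).comp derivative
  have hDap : ∀ a, D a = w * derivative a := fun a => rfl
  have hD : ∀ a b, D (a * b) = a * D b + D a * b := by
    intro a b; simp only [hDap, derivative_mul]; ring
  have hp2 : ((2 : k[X]) * m : k[X]) = -1 := by
    have : ((2 * m + 1 : ℕ) : k[X]) = 0 := by rw [hm]; exact CharP.cast_eq_zero _ _
    push_cast at this
    linear_combination this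
  have h2 : (2 : k[X]) ≠ 0 := by intro h; rw [h] at hp2; simp at hp2
  have hcp : ((p : ℕ) : k[X]) = 0 := CharP.cast_eq_zero _ _
  have hD1 : D F = (f ^ m) ^ p := by
    rw [hDap, hF, ← pow_succ]; congr 1; omega
  have hD2 : D (D F) = 0 := by
    rw [hD1, hDap, derivative_pow]; simp
  have hDp : (D ^ p) F = 0 := by
    rw [show p = (p - 2) + 2 by omega, pow_add, Module.End.mul_apply]
    have : (D ^ 2) F = 0 := by rw [pow_two, Module.End.mul_apply, hD2]
    rw [this, map_zero]
  have hX : (D ^ p) X = 0 := by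
    rw [deriv_pow_char_apply p D hD F, hF] at hDp
    exact (mul_eq_zero.1 hDp).resolve_left (pow_ne_zero _ hf)
  have hall : ∀ a, (D ^ p) a = 0 := by
    intro a; rw [deriv_pow_char_apply p D hD a, hX, mul_zero]
  let K : k[X] := (f ^ (p - 2)) ^ p * C κ
  have hK0 : K ≠ 0 := mul_ne_zero (pow_ne_zero _ (pow_ne_zero _ hf)) (C_ne_zero.2 hκ)
  have hKd : derivative K = 0 := by
    simp only [K, derivative_mul, derivative_pow, hcp]
    simp [hcp]
  have hDA : D (D A) = K * A := by
    have e0 : (p - 1) = (p - 2) + 1 := by omega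
    have hw : derivative w * (2 * f) = w * derivative f := by
      simp only [w]
      rw [← pow_mul, derivative_pow]
      have hN : ((m * (p - 1) : ℕ) : k[X]) * 2 = 1 := by
        rw [Nat.cast_mul, Nat.cast_sub (by omega), hcp]
        push_cast
        linear_combination -hp2
      have e1 : m * (p - 1) = (m * (p - 1) - 1) + 1 := by
        have : 0 < m * (p - 1) := Nat.mul_pos (by omega) (by omega)
        omega
      have e2 : f ^ (m * (p - 1)) = f ^ (m * (p - 1) - 1) * f := by
        rw [← pow_succ, ← e1]
      rw [e2, C_eq_natCast]
      linear_combination (f ^ (m * (p - 1) - 1) * derivative f * f) * hN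
    have h3 : (2 * f) * (D (D A)) = (2 * f) * (K * A) := by
      simp only [hDap, derivative_mul]
      have e3 : w * w = (f ^ (p - 2)) ^ p * f := by
        simp only [w]
        rw [← pow_mul, ← pow_add, ← pow_mul, ← pow_succ]
        congr 1
        obtain ⟨j, rfl⟩ : ∃ j, m = j + 1 := ⟨m - 1, by omega⟩
        subst hm
        have : 2 * (j + 1) + 1 - 1 = 2 * j + 2 := by omega
        have h' : 2 * (j + 1) + 1 - 2 = 2 * j + 1 := by omega
        rw [this, h']; ring
      simp only [K]
      linear_combination w * derivative A * hw + w * w * hode + (2 * C κ * A) * e3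
    exact mul_left_cancel₀ (mul_ne_zero h2 hf) h3
  have hKc : ∀ j : ℕ, derivative (K ^ j) = 0 := by
    intro j; rw [derivative_pow, hKd]; simp
  have hDj : ∀ j : ℕ, (D ^ (2 * j)) A = K ^ j * A := by
    intro j
    induction j with
    | zero => simp
    | succ j ih =>
      rw [mul_add, mul_one, add_comm, pow_add, Module.End.mul_apply, ih, pow_two, Module.End.mul_apply]
      rw [hD, hDap (K ^ j), hKc, mul_zero, zero_mul, add_zero, hD, hDap (K ^ j), hKc, hDA]
      ring
  have h5 := hDj p
  rw [two_mul, pow_add, Module.End.mul_apply, hall] at h5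
  exact mul_ne_zero (pow_ne_zero _ hK0) hA h5.symm
end

section
variable {k : Type*} [Field k] [DecidableEq k] {s t : k}

set_option maxHeartbeats 1000000 in
theorem norm_exists (h2 : (2 : k) ≠ 0) {x0 y0 : k} (h : Affine.Nonsingular (Wc s t) x0 y0) (hy0 : y0 ≠ 0)
    (p : ℕ) (hP : p • Affine.Point.some x0 y0 h = 0) :
    ∃ (A B : k[X]) (c : k), c ≠ 0 ∧ A ^ 2 - (X ^ 3 + C s * X + C t) * B ^ 2 = C c * (X - C x0) ^ p ∧
      ¬ ((X - C x0) ∣ A ∧ (X - C x0) ∣ B) ∧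
      (A ^ 2 - (X ^ 3 + C s * X + C t) * B ^ 2).degree = max (2 • A.degree) (2 • B.degree + 3) := by
  let W : Affine k := Wc s t
  have hcl : ClassGroup.mk W.FunctionField (Affine.CoordinateRing.XYIdeal' h ^ p) = 1 := by
    have h1 := congrArg Affine.Point.toClass hP
    rw [map_nsmul, Affine.Point.toClass_some, map_zero] at h1
    rw [map_pow]
    exact h1
  have hI : ((Affine.CoordinateRing.XYIdeal' h ^ p : (FractionalIdeal (nonZeroDivisors W.CoordinateRing) W.FunctionField)ˣ) :
      FractionalIdeal (nonZeroDivisors W.CoordinateRing) W.FunctionField) =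
      ((Affine.CoordinateRing.XYIdeal W x0 (C y0) ^ p : Ideal W.CoordinateRing)) := by
    rw [Units.val_pow_eq_pow_val, Affine.CoordinateRing.XYIdeal'_eq, FractionalIdeal.coeIdeal_pow]
  obtain ⟨g, hg0, hg⟩ := (ClassGroup.mk_eq_one_of_coe_ideal hI).1 hcl
  obtain ⟨A, B, hAB⟩ := Affine.CoordinateRing.exists_smul_basis_eq (W' := W) g
  let Q : k[X] := X ^ 3 + C s * X + C t
  have hYY : Affine.CoordinateRing.mk W (X : k[X][X]) * Affine.CoordinateRing.mk W (X : k[X][X]) = Affine.CoordinateRing.mk W (C Q) := by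
    have : Affine.CoordinateRing.mk W (Affine.polynomial W) = 0 := AdjoinRoot.mk_self
    rw [← map_mul, ← sub_eq_zero, ← map_sub, ← this]
    congr 1
    simp [Affine.polynomial, W, Wc, Q]; ring
  have hlift : (Affine.polynomial W).eval₂ (AdjoinRoot.of (Affine.polynomial W)) (-(Affine.CoordinateRing.mk W (X : k[X][X]))) = 0 := by
    have : Affine.polynomial W = (X : k[X][X]) ^ 2 - C Q := by simp [Affine.polynomial, W, Wc, Q]
    refine (congrArg (eval₂ (AdjoinRoot.of (Affine.polynomial W)) (-(Affine.CoordinateRing.mk W (X : k[X][X])))) this).trans ?_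
    rw [eval₂_sub, eval₂_pow, eval₂_X, eval₂_C, neg_sq, pow_two, hYY]
    exact sub_self _
  let σ : W.CoordinateRing →+* W.CoordinateRing := AdjoinRoot.lift (AdjoinRoot.of _) (-(Affine.CoordinateRing.mk W (X : k[X][X]))) hlift
  have hσC : ∀ a : k[X], σ (Affine.CoordinateRing.mk W (C a)) = Affine.CoordinateRing.mk W (C a) := fun a =>
    AdjoinRoot.lift_of hlift
  have hσY : σ (Affine.CoordinateRing.mk W (X : k[X][X])) = - Affine.CoordinateRing.mk W (X : k[X][X]) :=
    AdjoinRoot.lift_root hlift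
  let I := Affine.CoordinateRing.XYIdeal W x0 (C y0)
  have hJ : I.map σ = Affine.CoordinateRing.XYIdeal W x0 (C (Affine.negY W x0 y0)) := by
    have e1 : Affine.negY W x0 y0 = - y0 := Wc_negY
    rw [e1]
    simp only [I, Affine.CoordinateRing.XYIdeal]
    rw [Ideal.map_span, Set.image_pair]
    have e2 : σ (Affine.CoordinateRing.XClass W x0) = Affine.CoordinateRing.XClass W x0 := hσC _
    have e3 : σ (Affine.CoordinateRing.YClass W (C y0)) = - Affine.CoordinateRing.YClass W (C (-y0)) := by
      simp only [Affine.CoordinateRing.YClass, map_sub, hσC, hσY]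
      simp only [map_neg, sub_neg_eq_add]; ring
    rw [e2, e3, Ideal.span_pair_comm, Ideal.span_pair_comm (x := Affine.CoordinateRing.XClass W x0), Ideal.span_insert, Ideal.span_insert, Ideal.span_singleton_neg]
  have hgA : g = Affine.CoordinateRing.mk W (C A) + Affine.CoordinateRing.mk W (C B) * Affine.CoordinateRing.mk W (X : k[X][X]) := by
    rw [← hAB, Affine.CoordinateRing.smul, Affine.CoordinateRing.smul, mul_one]
  let N : k[X] := A ^ 2 - Q * B ^ 2
  have hN : g * σ g = Affine.CoordinateRing.mk W (C N) := by
    simp only [hgA, map_add, map_mul, hσC, hσY, N, map_sub, map_pow]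
    linear_combination (-(Affine.CoordinateRing.mk W (C B)) ^ 2) * hYY
  have hass : Associated (Affine.CoordinateRing.mk W (C N)) (Affine.CoordinateRing.mk W (C ((X - C x0) ^ p))) := by
    rw [← Ideal.span_singleton_eq_span_singleton, ← hN, ← Ideal.span_singleton_mul_span_singleton,
      ← hg, show Ideal.span {σ g} = (Ideal.span {g}).map σ by rw [Ideal.map_span, Set.image_singleton],
      ← hg, Ideal.map_pow, ← mul_pow]
    have := Affine.CoordinateRing.XYIdeal_neg_mul h
    have e4 : I * I.map σ = Affine.CoordinateRing.XIdeal W x0 := by rw [hJ, mul_comm]; exact this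
    change (I * I.map σ) ^ p = _
    rw [e4, Affine.CoordinateRing.XIdeal, Ideal.span_singleton_pow, map_pow, map_pow]; rfl
  have hdvd : ∀ a b : k[X], Affine.CoordinateRing.mk W (C a) ∣ Affine.CoordinateRing.mk W (C b) → a ∣ b := by
    rintro a b ⟨q, hq⟩
    obtain ⟨u, v, rfl⟩ := Affine.CoordinateRing.exists_smul_basis_eq (W' := W) q
    have : (a * u - b) • (1 : W.CoordinateRing) + (a * v) • Affine.CoordinateRing.mk W (X : k[X][X]) = 0 := by
      simp only [Affine.CoordinateRing.smul, map_sub, map_mul] at hq ⊢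
      linear_combination -hq
    have := (Affine.CoordinateRing.smul_basis_eq_zero this).1
    exact ⟨u, by linear_combination -this⟩
  have hass2 : Associated N ((X - C x0) ^ p) :=
    associated_of_dvd_dvd (hdvd _ _ hass.dvd) (hdvd _ _ hass.symm.dvd)
  obtain ⟨u, hu⟩ := hass2.symm
  obtain ⟨c, hc, hcu⟩ := Polynomial.isUnit_iff.1 u.isUnit
  refine ⟨A, B, c, hc.ne_zero, ?_, ?_, ?_⟩
  · rw [hcu, mul_comm (u : k[X]), hu]
  · rintro ⟨⟨a, ha⟩, ⟨b, hb⟩⟩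
    have he : (Affine.polynomial W).eval₂ (evalRingHom x0) (-y0) = 0 := by
      have : Affine.polynomial W = (X : k[X][X]) ^ 2 - C Q := by simp [Affine.polynomial, W, Wc, Q]
      rw [this]
      have e := Wc_eqn.1 h.1
      rw [eval₂_sub, eval₂_pow, eval₂_X, eval₂_C, coe_evalRingHom]
      simp only [Q, eval_add, eval_mul, eval_pow, eval_X, eval_C]; linear_combination e
    let ev : W.CoordinateRing →+* k := AdjoinRoot.lift (evalRingHom x0) (-y0) he
    have hevC : ∀ a : k[X], ev (Affine.CoordinateRing.mk W (C a)) = a.eval x0 := fun a =>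
      AdjoinRoot.lift_of he
    have hevY : ev (Affine.CoordinateRing.mk W (X : k[X][X])) = - y0 := AdjoinRoot.lift_root he
    have hmem : (Affine.CoordinateRing.YClass W (C y0)) ^ p ∈ Ideal.span {g} := by
      rw [← hg]
      apply Ideal.pow_mem_pow
      apply Ideal.subset_span; simp
    obtain ⟨q, hq⟩ := Ideal.mem_span_singleton.1 hmem
    have := congrArg ev hq
    rw [map_mul, hgA, map_add, map_mul, hevC, hevC, ha, hb, map_pow, Affine.CoordinateRing.YClass, map_sub,
      map_sub, hevC, hevY] at this
    simp only [eval_mul, eval_sub, eval_X, eval_C, sub_self, zero_mul, zero_add] at this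
    have := eq_zero_of_pow_eq_zero this
    have : 2 * y0 = 0 := by linear_combination -this
    simp [h2, hy0] at this
  · have h1 := Affine.CoordinateRing.degree_norm_smul_basis (W' := W) A B
    have h3 := Affine.CoordinateRing.norm_smul_basis (W' := W) A B
    have h4 : A ^ 2 - (X ^ 3 + C s * X + C t) * B ^ 2 = A ^ 2 - A * B * (C W.a₁ * X + C W.a₃) -
      B ^ 2 * (X ^ 3 + C W.a₂ * X ^ 2 + C W.a₄ * X + C W.a₆) := by
      have a1 : W.a₁ = 0 := rfl
      have a2 : W.a₂ = 0 := rfl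
      have a3 : W.a₃ = 0 := rfl
      have a4 : W.a₄ = s := rfl
      have a6 : W.a₆ = t := rfl
      rw [a1, a2, a3, a4, a6, C_0]; ring
    rw [h4, ← h3, h1]
end

section
variable {k : Type*} [Field k] [DecidableEq k] {s t : k}

theorem no_tors (p : ℕ) [Fact p.Prime] [CharP k p] (m : ℕ) (hm : 2 * m + 1 = p) (hm1 : 1 ≤ m)
    {x0 y0 : k} (h : Affine.Nonsingular (Wc s t) x0 y0) (hP : p • Affine.Point.some x0 y0 h = 0)
    (e1 e2 : k) (he : e1 ≠ e2) (h1 : e1 ^ 3 + s * e1 + t = 0) (h2 : e2 ^ 3 + s * e2 + t = 0)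
    (F : k[X]) (hF : derivative F = (X ^ 3 + C s * X + C t) ^ m) : False := by
  have hp : p.Prime := Fact.out
  have h2k : (2 : k) ≠ 0 := by
    intro h2
    have : ((2 : ℕ) : k) = 0 := by exact_mod_cast h2
    rw [CharP.cast_eq_zero_iff k p] at this
    have := Nat.le_of_dvd (by norm_num) this
    omega
  have h2X : (2 : k[X]) ≠ 0 := by
    rw [← C_ofNat]; exact C_ne_zero.2 h2k
  have hy0 : y0 ≠ 0 := by
    rintro rfl
    have : Affine.Point.some x0 0 h + Affine.Point.some x0 0 h = 0 := by
      rw [add_eq_zero_iff_eq_neg, Affine.Point.neg_some]; simp [Wc]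
    rw [← hm, add_nsmul, mul_comm, mul_nsmul, two_nsmul, ← nsmul_add, this, nsmul_zero, one_nsmul, zero_add] at hP
    exact Affine.Point.some_ne_zero h hP
  obtain ⟨A, B, c, hc, hN, hcop, hdeg⟩ := norm_exists h2k h hy0 p hP
  set f : k[X] := X ^ 3 + C s * X + C t with hf
  have hfdeg : f.degree = 3 := by
    have : f = C 1 * X ^ 3 + C 0 * X ^ 2 + C s * X + C t := by rw [hf]; simp
    rw [this]; exact degree_cubic one_ne_zero
  have hf0 : f ≠ 0 := by intro h0; rw [h0] at hfdeg; simp at hfdeg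
  rw [hN] at hdeg
  have hdp : (C c * (X - C x0) ^ p).degree = ((p : ℕ) : WithBot ℕ) := by
    rw [degree_C_mul hc, degree_pow, degree_X_sub_C]; simp
  rw [hdp] at hdeg
  have hB0 : B ≠ 0 := by
    rintro rfl
    simp only [degree_zero] at hdeg
    by_cases hA : A = 0
    · rw [hA] at hdeg; simp at hdeg
    · rw [degree_eq_natDegree hA] at hdeg
      have : (2 • (⊥ : WithBot ℕ) + 3) = ⊥ := by rw [two_nsmul]; rfl
      rw [this, max_bot_right, two_nsmul] at hdeg
      norm_cast at hdeg
      omega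
  have hdegs : p = 2 * B.natDegree + 3 ∧ (A ≠ 0 → A.natDegree ≤ m) := by
    rw [degree_eq_natDegree hB0] at hdeg
    by_cases hA : A = 0
    · rw [hA, degree_zero] at hdeg
      rw [show (2 • (⊥ : WithBot ℕ)) = ⊥ from rfl, max_bot_left, two_nsmul] at hdeg
      refine ⟨?_, fun h => absurd hA h⟩
      have : p = B.natDegree + B.natDegree + 3 := by exact_mod_cast hdeg
      omega
    · rw [degree_eq_natDegree hA, two_nsmul, two_nsmul] at hdeg
      have : p = max (A.natDegree + A.natDegree) (B.natDegree + B.natDegree + 3) := by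
        have hdeg' : ((p : ℕ) : WithBot ℕ) = ((max (A.natDegree + A.natDegree) (B.natDegree + B.natDegree + 3) : ℕ) : WithBot ℕ) := by
          rw [hdeg]; exact (WithBot.coe_max _ _).symm
        exact_mod_cast hdeg'
      omega
  have hAm : A.natDegree ≤ m := by
    by_cases hA : A = 0
    · simp [hA]
    · exact hdegs.2 hA
  have hcAB : IsCoprime A B := by
    refine isCoprime_of_prime_dvd (fun h => hB0 h.2) ?_
    intro z hz hzA hzB
    have hzd : z ∣ C c * (X - C x0) ^ p := by
      rw [← hN]
      exact dvd_sub (dvd_pow hzA two_ne_zero) (Dvd.dvd.mul_left (dvd_pow hzB two_ne_zero) _)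
    have hzx : z ∣ X - C x0 := hz.dvd_of_dvd_pow ((Polynomial.dvd_C_mul hc).1 hzd)
    have has : Associated z (X - C x0) := hz.irreducible.associated_of_dvd (irreducible_X_sub_C x0) hzx
    exact hcop ⟨has.symm.dvd.trans hzA, has.symm.dvd.trans hzB⟩
  have hd : 2 * A * derivative A = B * (derivative f * B + 2 * f * derivative B) := by
    have := congrArg derivative hN
    have hz : derivative (C c * (X - C x0) ^ p) = 0 := by
      rw [derivative_C_mul, derivative_pow]; simp
    rw [hz, derivative_sub, derivative_mul, derivative_pow, derivative_pow] at this
    simp only [Nat.add_one_sub_one, pow_one, Nat.cast_ofNat, C_ofNat] at this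
    linear_combination this
  obtain ⟨E, hE⟩ : B ∣ derivative A := by
    have h1 : B ∣ A * (2 * derivative A) := ⟨_, by rw [← hd]; ring⟩
    have h2 : B ∣ 2 * derivative A := hcAB.symm.dvd_of_dvd_mul_left h1
    rw [← C_ofNat] at h2
    exact (Polynomial.dvd_C_mul h2k).1 h2
  have hEc : E.natDegree = 0 := by
    by_cases hE0 : E = 0
    · simp [hE0]
    have h3 := natDegree_derivative_le A
    rw [hE, natDegree_mul hB0 hE0] at h3
    omega
  obtain ⟨e, rfl⟩ := natDegree_eq_zero.1 hEc
  have he0 : e ≠ 0 := by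
    rintro rfl
    rw [C_0, mul_zero] at hE
    have hAc : A.natDegree = 0 := by
      by_contra hne
      have h4 : A.natDegree - 1 + 1 = A.natDegree := by omega
      have := congrArg (fun q => coeff q (A.natDegree - 1)) hE
      simp only [coeff_derivative, coeff_zero, h4] at this
      have h5 : ((A.natDegree - 1 : ℕ) : k) + 1 = (A.natDegree : ℕ) := by
        rw [← h4]; push_cast; simp
      rw [h5] at this
      rcases mul_eq_zero.1 this with h6 | h6
      · rw [coeff_natDegree, leadingCoeff_eq_zero] at h6; rw [h6] at hne; simp at hne
      · rw [CharP.cast_eq_zero_iff k p] at h6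
        have := Nat.le_of_dvd (by omega) h6
        omega
    obtain ⟨α, rfl⟩ := natDegree_eq_zero.1 hAc
    have g1 := congrArg (eval e1) hN
    have g2 := congrArg (eval e2) hN
    simp only [hf, eval_sub, eval_mul, eval_add, eval_pow, eval_X, eval_C, h1, h2, zero_mul, sub_zero] at g1 g2
    have : (e1 - x0) ^ p = (e2 - x0) ^ p := mul_left_cancel₀ hc (g1.symm.trans g2)
    have h8 : (e1 - x0 - (e2 - x0)) ^ p = 0 := by
      rw [sub_pow_char, this, sub_self]
    have := eq_zero_of_pow_eq_zero h8
    apply he; linear_combination this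
  have hA0 : A ≠ 0 := by
    rintro rfl
    rw [derivative_zero] at hE
    rcases mul_eq_zero.1 hE.symm with h6 | h6
    · exact hB0 h6
    · exact he0 (C_eq_zero.1 h6)
  have hE2 : 2 * A * C e = derivative f * B + 2 * f * derivative B := by
    apply mul_left_cancel₀ hB0
    rw [← hd, hE]; ring
  refine ode_contra p m hm hm1 f F A (e ^ 2) hf0 hF hA0 (pow_ne_zero _ he0) ?_
  rw [hE, derivative_mul, derivative_C, C_pow]
  linear_combination -(C e) * hE2
end

section
variable {k : Type*} [Field k]

noncomputable def Hs (k : Type*) [Field k] (m : ℕ) : k[X] :=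
  ∑ i ∈ Finset.range (m + 1), C ((m.choose i : k) ^ 2) * X ^ i

theorem Hs_coeff (m i : ℕ) : (Hs k m).coeff i = (m.choose i : k) ^ 2 := by
  unfold Hs
  simp only [finsetSum_coeff, coeff_C_mul, coeff_X_pow, mul_ite, mul_one, mul_zero]
  rw [Finset.sum_ite_eq]
  split_ifs with h
  · rfl
  · rw [Nat.choose_eq_zero_of_lt (by simpa using h)]; simp

theorem Hs_natDegree (m : ℕ) : (Hs k m).natDegree = m := by
  apply natDegree_eq_of_le_of_coeff_ne_zero
  · rw [natDegree_le_iff_coeff_eq_zero]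
    intro i hi
    rw [Hs_coeff, Nat.choose_eq_zero_of_lt (by simpa using hi)]; simp
  · rw [Hs_coeff]; simp

theorem Hs_ode (p : ℕ) [CharP k p] (m : ℕ) (hm : 2 * m + 1 = p) :
    4 * X * (1 - X) * derivative (derivative (Hs k m)) + 4 * (1 - 2 * X) * derivative (Hs k m)
      - Hs k m = 0 := by
  have hmk : 2 * (m : k) + 1 = 0 := by
    have := CharP.cast_eq_zero k p
    rw [← hm] at this; exact_mod_cast this
  have hrec : ∀ i : ℕ, ((i : k) + 1) ^ 2 * (m.choose (i + 1) : k) ^ 2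
      = ((m : k) - i) ^ 2 * (m.choose i : k) ^ 2 := by
    intro i
    rcases le_or_gt i m with h | h
    · have := Nat.choose_succ_right_eq m i
      have := congrArg (Nat.cast (R := k)) this
      push_cast [Nat.cast_sub h] at this
      linear_combination ((i + 1 : k) * (m.choose (i + 1) : k) + (m - i : k) * m.choose i) * this
    · rw [Nat.choose_eq_zero_of_lt h, Nat.choose_eq_zero_of_lt (by omega)]; simp
  have hre : 4 * X * (1 - X) * derivative (derivative (Hs k m)) + 4 * (1 - 2 * X) * derivative (Hs k m)
      - Hs k m = C 4 * (X * derivative (derivative (Hs k m))) - C 4 * (X * (X * derivative (derivative (Hs k m))))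
       + C 4 * derivative (Hs k m) - C 8 * (X * derivative (Hs k m)) - Hs k m := by
    simp only [C_ofNat]; ring
  rw [hre]
  ext i
  have h := hrec i
  rcases i with _ | _ | i
  · simp only [coeff_add, coeff_sub, mul_coeff_zero, coeff_X_zero, coeff_C_zero, coeff_derivative, Hs_coeff, coeff_zero]
    push_cast at h ⊢
    linear_combination 4 * h + (2 * (m : k) - 1) * (m.choose 0 : k) ^ 2 * hmk
  · simp only [coeff_add, coeff_sub, coeff_C_mul, coeff_X_mul, mul_coeff_zero, coeff_X_zero, coeff_derivative, Hs_coeff, coeff_zero]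
    push_cast at h ⊢
    linear_combination 4 * h + (2 * (m : k) - 5) * (m.choose (0 + 1) : k) ^ 2 * hmk
  · simp only [coeff_add, coeff_sub, coeff_C_mul, coeff_X_mul, coeff_derivative, Hs_coeff, coeff_zero]
    push_cast at h ⊢
    linear_combination 4 * h + (2 * (m : k) - 4 * (i + 1 + 1) - 1) * (m.choose (i + 1 + 1) : k) ^ 2 * hmk

theorem Hs_ode_iter (p : ℕ) [CharP k p] (m : ℕ) (hm : 2 * m + 1 = p) (j : ℕ) :
    4 * X * (1 - X) * derivative^[j + 2] (Hs k m)
      + 4 * ((j : k[X]) + 1) * (1 - 2 * X) * derivative^[j + 1] (Hs k m)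
      - (2 * (j : k[X]) + 1) ^ 2 * derivative^[j] (Hs k m) = 0 := by
  induction j with
  | zero =>
    have := Hs_ode (k := k) p m hm
    simp only [Function.iterate_succ', Function.comp, Function.iterate_zero, id]
    push_cast
    linear_combination this
  | succ j ih =>
    have := congrArg derivative ih
    simp only [derivative_sub, derivative_add, derivative_mul, derivative_X, derivative_one, derivative_zero,
      derivative_pow, derivative_natCast, derivative_ofNat, ← Function.iterate_succ_apply' derivative] at this
    push_cast
    simp only [Nat.succ_eq_add_one] at this
    rw [show j + 1 + 2 = j + 2 + 1 from rfl, show j + 1 + 1 = j + 2 from rfl]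
    rw [show j + 1 + 1 = j + 2 from rfl] at this
    linear_combination this

theorem Hs_zero (m : ℕ) : (Hs k m).eval 0 = 1 := by
  rw [← coeff_zero_eq_eval_zero, Hs_coeff]; simp

theorem Hs_one (p : ℕ) [Fact p.Prime] [CharP k p] (m : ℕ) (hm : 2 * m + 1 = p) : (Hs k m).eval 1 ≠ 0 := by
  unfold Hs
  simp only [eval_finsetSum, eval_mul, eval_C, eval_pow, eval_X, one_pow, mul_one]
  have h1 := Nat.sum_range_choose_sq m
  have h2 : ((∑ i ∈ Finset.range (m + 1), (m.choose i : k) ^ 2)) = ((2 * m).choose m : ℕ) := by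
    rw [← h1]; push_cast; rfl
  rw [h2]
  intro h0
  rw [CharP.cast_eq_zero_iff k p] at h0
  have h3 : p ∣ (2 * m).factorial := by
    rw [← Nat.choose_mul_factorial_mul_factorial (show m ≤ 2 * m by omega)]
    exact Dvd.dvd.mul_right (Dvd.dvd.mul_right h0 _) _
  rw [(Fact.out : p.Prime).dvd_factorial] at h3
  omega

theorem Hs_simple (p : ℕ) [Fact p.Prime] [CharP k p] (m : ℕ) (hm : 2 * m + 1 = p) (hm1 : 1 ≤ m) (l : k)
    (h0 : (Hs k m).eval l = 0) : (derivative (Hs k m)).eval l ≠ 0 := by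
  intro h1
  have hl0 : l ≠ 0 := by rintro rfl; rw [Hs_zero] at h0; exact one_ne_zero h0
  have hl1 : 1 - l ≠ 0 := by
    intro h; have : l = 1 := by linear_combination -h
    rw [this] at h0; exact Hs_one p m hm h0
  have h2k : (2 : k) ≠ 0 := by
    intro h2
    have : ((2 : ℕ) : k) = 0 := by exact_mod_cast h2
    rw [CharP.cast_eq_zero_iff k p] at this
    have := Nat.le_of_dvd (by norm_num) this
    omega
  have h4k : (4 : k) ≠ 0 := by
    have : (4 : k) = 2 * 2 := by norm_num
    rw [this]; exact mul_ne_zero h2k h2k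
  have key : ∀ j, (derivative^[j] (Hs k m)).eval l = 0 ∧ (derivative^[j + 1] (Hs k m)).eval l = 0 := by
    intro j
    induction j with
    | zero => exact ⟨h0, h1⟩
    | succ j ih =>
      refine ⟨ih.2, ?_⟩
      have := congrArg (eval l) (Hs_ode_iter (k := k) p m hm j)
      simp only [eval_sub, eval_add, eval_mul, ih.1, ih.2, mul_zero, add_zero, sub_zero, eval_zero, eval_X,
        eval_one, eval_ofNat] at this
      rcases mul_eq_zero.1 this with h | h
      · exact absurd h (mul_ne_zero (mul_ne_zero h4k hl0) hl1)
      · exact h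
  have hm' := (key m).1
  have hc : derivative^[m] (Hs k m) = C ((m.factorial : ℕ) : k) := by
    ext i
    rw [coeff_iterate_derivative, Hs_coeff, coeff_C]
    split_ifs with hi
    · subst hi; simp [Nat.descFactorial_self]
    · rw [Nat.choose_eq_zero_of_lt (by omega)]; simp
  rw [hc, eval_C, CharP.cast_eq_zero_iff k p, (Fact.out : p.Prime).dvd_factorial] at hm'
  omega

theorem Hs_card [DecidableEq k] [IsAlgClosed k] (p : ℕ) [Fact p.Prime] [CharP k p] (m : ℕ) (hm : 2 * m + 1 = p) (hm1 : 1 ≤ m) :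
    (Hs k m).roots.toFinset.card = m := by
  have hH0 : Hs k m ≠ 0 := by
    intro h; have := Hs_zero (k := k) m; rw [h] at this; simp at this
  have hnd : (Hs k m).roots.Nodup := by
    rw [Multiset.nodup_iff_count_le_one]
    intro a
    rw [count_roots]
    by_contra hc
    push Not at hc
    have := (one_lt_rootMultiplicity_iff_isRoot hH0).1 hc
    exact Hs_simple p m hm hm1 a this.1 this.2
  rw [Multiset.toFinset_card_of_nodup hnd, ← (IsAlgClosed.splits (Hs k m)).natDegree_eq_card_roots, Hs_natDegree]

theorem exists_antideriv (p : ℕ) [Fact p.Prime] [CharP k p] (m : ℕ) (hm : 2 * m + 1 = p) (q : k[X])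
    (hq : q.natDegree ≤ 3 * m) (hc : q.coeff (2 * m) = 0) : ∃ F : k[X], derivative F = q := by
  refine ⟨∑ n ∈ Finset.range (3 * m + 1), C (q.coeff n / ((n : k) + 1)) * X ^ (n + 1), ?_⟩
  rw [derivative_sum]
  conv_rhs => rw [q.as_sum_range_C_mul_X_pow' (Nat.lt_succ_of_le hq)]
  apply Finset.sum_congr rfl
  intro n hn
  rw [derivative_C_mul_X_pow]
  push_cast
  by_cases h0 : (n : k) + 1 = 0
  · have h1 : ((n + 1 : ℕ) : k) = 0 := by exact_mod_cast h0
    rw [CharP.cast_eq_zero_iff k p] at h1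
    obtain ⟨d, hd⟩ := h1
    have hn' : n < 3 * m + 1 := by simpa using hn
    have : n = 2 * m := by
      rcases d with _ | _ | d
      · omega
      · omega
      · have : p * (d + 1 + 1) = p * d + 2 * p := by ring
        omega
    rw [h0, this, hc]; simp
  · rw [div_mul_cancel₀ _ h0]

theorem coeff_g (m : ℕ) (d l : k) :
    ((X * (X - C d) * (X - C (d * l))) ^ m).coeff (2 * m) = (-d) ^ m * (Hs k m).eval l := by
  rw [mul_pow, mul_pow, mul_assoc, two_mul, coeff_X_pow_mul, coeff_mul, Finset.Nat.sum_antidiagonal_eq_sum_range_succ_mk]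
  unfold Hs
  rw [eval_finsetSum, Finset.mul_sum]
  apply Finset.sum_congr rfl
  intro i hi
  have hi' : i ≤ m := by simpa [Nat.lt_succ_iff] using hi
  simp only [sub_eq_add_neg, ← C_neg, coeff_X_add_C_pow, eval_mul, eval_C, eval_pow, eval_X]
  rw [Nat.choose_symm hi', Nat.sub_sub_self hi', neg_mul_eq_neg_mul, mul_pow]
  have : (-d) ^ m = (-d) ^ (m - i) * (-d) ^ i := by rw [← pow_add]; congr 1; omega
  rw [this]; ring

theorem exists_int (p : ℕ) [Fact p.Prime] [CharP k p] (m : ℕ) (hm : 2 * m + 1 = p) (a d l : k)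
    (hl : (Hs k m).eval l = 0) :
    ∃ F : k[X], derivative F = ((X - C a) * (X - C (a + d)) * (X - C (a + d * l))) ^ m := by
  obtain ⟨G, hG⟩ := exists_antideriv p m hm ((X * (X - C d) * (X - C (d * l))) ^ m) (by
    refine natDegree_pow_le.trans ?_
    rw [mul_comm 3]
    apply Nat.mul_le_mul_left
    compute_degree) (by rw [coeff_g, hl, mul_zero])
  refine ⟨G.comp (X - C a), ?_⟩
  rw [derivative_comp, hG]
  simp only [derivative_sub, derivative_X, derivative_C, sub_zero, one_mul, pow_comp, mul_comp, sub_comp, X_comp, C_comp, C_add]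
  rw [sub_sub, sub_sub]
end

section
variable {k : Type*} [CommRing k]

/-- weighted degree bound -/
def DB (N : ℤ) (P : k[X][X]) : Prop := ∀ i j : ℕ, N < 2 * ((i : ℤ) + j) → (P.coeff j).coeff i = 0

theorem DB.mono {N M : ℤ} {P : k[X][X]} (h : DB N P) (hNM : N ≤ M) : DB M P :=
  fun i j hij => h i j (by omega)

theorem DB.sub {N M : ℤ} {P Q : k[X][X]} (h : DB N P) (h' : DB N Q) (hNM : N ≤ M) : DB M (P - Q) := by
  intro i j hij
  rw [coeff_sub, coeff_sub, h i j (by omega), h' i j (by omega), sub_zero]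

theorem DB.add {N : ℤ} {P Q : k[X][X]} (h : DB N P) (h' : DB N Q) : DB N (P + Q) := by
  intro i j hij
  rw [coeff_add, coeff_add, h i j hij, h' i j hij, add_zero]

theorem DB.mul {N M L : ℤ} {P Q : k[X][X]} (h : DB N P) (h' : DB M Q) (hL : N + M ≤ L) : DB L (P * Q) := by
  intro i j hij
  rw [coeff_mul, finsetSum_coeff]
  apply Finset.sum_eq_zero
  rintro ⟨a, b⟩ hab
  rw [coeff_mul]
  apply Finset.sum_eq_zero
  rintro ⟨c, d⟩ hcd
  rw [Finset.HasAntidiagonal.mem_antidiagonal] at hab hcd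
  simp only at hab hcd ⊢
  rcases lt_or_ge N (2 * ((c : ℤ) + a)) with h1 | h1
  · rw [h c a h1, zero_mul]
  · rw [h' d b (by omega), mul_zero]

theorem DB.one : DB 0 (1 : k[X][X]) := by
  intro i j hij
  rcases j with _ | j
  · simp only [coeff_one_zero]
    rw [coeff_one, if_neg (by omega)]
  · rw [coeff_one, if_neg (by omega), coeff_zero]

theorem DB.pow {N : ℤ} {P : k[X][X]} (h : DB N P) (n : ℕ) : DB (n * N) (P ^ n) := by
  induction n with
  | zero => rw [pow_zero]; exact DB.one.mono (by simp)
  | succ n ih => rw [pow_succ]; exact ih.mul h (by push_cast; linarith)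

theorem DB.X : DB 2 (X : k[X][X]) := by
  intro i j hij
  rw [coeff_X]
  split_ifs with h
  · subst h; rw [coeff_one, if_neg (by omega)]
  · simp

theorem DB.C {s : k[X]} {d : ℕ} (hs : s.natDegree ≤ d) : DB (2 * d) (C s) := by
  intro i j hij
  rw [coeff_C]
  split_ifs with h
  · exact coeff_eq_zero_of_natDegree_lt (by omega)
  · simp

theorem DB.nat (n : ℕ) : DB 0 (n : k[X][X]) := by
  have : (n : k[X][X]) = Polynomial.C (n : k[X]) := by simp
  rw [this]
  exact DB.C (d := 0) (by simp)

/-- the bound -/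
def NN (n : ℕ) : ℤ := (n : ℤ) ^ 2 - if Even n then 4 else 1

theorem DB_preΨ' {s t : k[X]} (hs : s.natDegree ≤ 2) (ht : t.natDegree ≤ 3) (n : ℕ) :
    DB (NN n) ((Wc s t).preΨ' n) := by
  have hS : DB 4 (Polynomial.C s) := DB.C hs
  have hT : DB 6 (Polynomial.C t) := DB.C ht
  have hX := DB.X (k := k)
  have hb : DB 12 ((Wc s t).Ψ₂Sq ^ 2) := by
    have : (Wc s t).Ψ₂Sq = ((4 : ℕ) : k[X][X]) * Polynomial.X ^ 3 + ((4 : ℕ) : k[X][X]) * (Polynomial.C s * Polynomial.X) + ((4 : ℕ) : k[X][X]) * Polynomial.C t := by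
      simp [Ψ₂Sq, Wc, b₂, b₄, b₆]; simp only [C_ofNat]; ring
    rw [this]
    refine DB.mono (DB.pow (N := 6) ?_ 2) (by norm_num)
    exact (((DB.nat 4).mul (hX.pow 3) (by norm_num)).add ((DB.nat 4).mul (hS.mul hX (L := 6) (by norm_num)) (by norm_num))).add
      ((DB.nat 4).mul hT (by norm_num))
  induction n using normEDSRec with
  | zero => rw [preΨ'_zero]; intro i j _; simp
  | one => rw [preΨ'_one]; exact DB.one.mono (by simp [NN])
  | two => rw [preΨ'_two]; exact DB.one.mono (by simp [NN])
  | three =>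
    rw [preΨ'_three]
    have h : (Wc s t).Ψ₃ = ((3 : ℕ) : k[X][X]) * Polynomial.X ^ 4 + ((6 : ℕ) : k[X][X]) * (Polynomial.C s * Polynomial.X ^ 2) + ((12 : ℕ) : k[X][X]) * (Polynomial.C t * Polynomial.X)
        - Polynomial.C s ^ 2 := by
      simp [Ψ₃, Wc, b₂, b₄, b₆, b₈]; simp only [C_ofNat]; ring
    rw [h]
    refine DB.sub (N := 8) (((DB.nat 3).mul (hX.pow 4) (by norm_num)).add ((DB.nat 6).mul (hS.mul (hX.pow 2) (L := 8) (by norm_num)) (by norm_num))|>.add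
      ((DB.nat 12).mul (hT.mul hX (L := 8) (by norm_num)) (by norm_num))) (hS.pow 2) ?_
    have : ¬ Even 3 := by decide
    simp [NN, this]
  | four =>
    rw [preΨ'_four]
    have h : (Wc s t).preΨ₄ = ((2 : ℕ) : k[X][X]) * Polynomial.X ^ 6 + ((10 : ℕ) : k[X][X]) * (Polynomial.C s * Polynomial.X ^ 4) + ((40 : ℕ) : k[X][X]) * (Polynomial.C t * Polynomial.X ^ 3)
        - (((10 : ℕ) : k[X][X]) * (Polynomial.C s ^ 2 * Polynomial.X ^ 2) + ((8 : ℕ) : k[X][X]) * (Polynomial.C s * (Polynomial.C t * Polynomial.X)) + ((2 : ℕ) : k[X][X]) * Polynomial.C s ^ 3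
        + ((16 : ℕ) : k[X][X]) * Polynomial.C t ^ 2) := by
      simp [preΨ₄, Wc, b₂, b₄, b₆, b₈]; simp only [C_ofNat]; ring
    rw [h]
    refine DB.sub (N := 12) ?_ ?_ (by simp [NN, show Even 4 by decide])
    · exact ((DB.nat _).mul (hX.pow 6) (by norm_num)).add ((DB.nat _).mul (hS.mul (hX.pow 4) (L := 12) (by norm_num)) (by norm_num))|>.add
        ((DB.nat _).mul (hT.mul (hX.pow 3) (L := 12) (by norm_num)) (by norm_num))
    · exact ((((DB.nat _).mul ((hS.pow 2).mul (hX.pow 2) (L := 12) (by norm_num)) (by norm_num)).add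
        ((DB.nat _).mul (hS.mul (hT.mul hX (L := 8) (by norm_num)) (L := 12) (by norm_num)) (by norm_num))).add
        ((DB.nat _).mul (hS.pow 3) (by norm_num))).add ((DB.nat _).mul (hT.pow 2) (by norm_num))
  | even m h₁ h₂ h₃ h₄ h₅ =>
    rw [preΨ'_even]
    have hE : ∀ a, Even (m + a) ↔ (Even m ↔ Even a) := fun a => Nat.even_add
    refine DB.sub (N := NN (2 * (m + 3))) (((h₂.pow 2).mul h₃ le_rfl).mul h₅ ?_) ((h₁.mul h₃ le_rfl).mul (h₄.pow 2) ?_) le_rfl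
    all_goals
      simp only [NN, hE, even_two_mul, if_true, show Even 2 by decide, show Even 4 by decide, show ¬ Even 1 by decide,
        show ¬ Even 3 by decide, show ¬ Even 5 by decide, iff_true, iff_false]
      by_cases hm : Even m <;> simp only [hm, if_true, if_false, not_true, not_false_eq_true] <;> push_cast <;> nlinarith
  | odd m h₁ h₂ h₃ h₄ =>
    rw [preΨ'_odd]
    have hE : ∀ a, Even (m + a) ↔ (Even m ↔ Even a) := fun a => Nat.even_add
    have hi1 : DB (if Even m then 12 else 0) (if Even m then (Wc s t).Ψ₂Sq ^ 2 else 1) := by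
      split_ifs
      · exact hb
      · exact DB.one
    have hi2 : DB (if Even m then 0 else 12) (if Even m then 1 else (Wc s t).Ψ₂Sq ^ 2) := by
      split_ifs
      · exact DB.one
      · exact hb
    refine DB.sub (N := NN (2 * (m + 2) + 1)) ((h₄.mul (h₂.pow 3) le_rfl).mul hi1 ?_) ((h₁.mul (h₃.pow 3) le_rfl).mul hi2 ?_) le_rfl
    all_goals
      simp only [NN, hE, Nat.not_even_two_mul_add_one, if_false, show Even 2 by decide, show Even 4 by decide, show ¬ Even 1 by decide,
        show ¬ Even 3 by decide, iff_true, iff_false]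
      by_cases hm : Even m <;> simp only [hm, if_true, if_false, not_true, not_false_eq_true] <;> push_cast <;> nlinarith

theorem lead_bound {s t : k[X]} (hs : s.natDegree ≤ 2) (ht : t.natDegree ≤ 3) (p m : ℕ) (hm : 2 * m + 1 = p) :
    (((Wc s t).preΨ p).coeff (p * m)).natDegree ≤ m := by
  rw [preΨ_ofNat, natDegree_le_iff_coeff_eq_zero]
  intro i hi
  apply DB_preΨ' hs ht p i (p * m)
  rw [NN, ← hm, if_neg (Nat.not_even_two_mul_add_one m)]
  push_cast
  have : (m : ℤ) < i := by exact_mod_cast hi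
  nlinarith
end

section
variable {k : Type*} [Field k] [DecidableEq k] [IsAlgClosed k]

theorem two_three_ne (p : ℕ) [Fact p.Prime] [CharP k p] (hp5 : 5 ≤ p) : (2 : k) ≠ 0 ∧ (3 : k) ≠ 0 := by
  constructor
  · intro h2
    have : ((2 : ℕ) : k) = 0 := by exact_mod_cast h2
    rw [CharP.cast_eq_zero_iff k p] at this
    have := Nat.le_of_dvd (by norm_num) this
    omega
  · intro h2
    have : ((3 : ℕ) : k) = 0 := by exact_mod_cast h2
    rw [CharP.cast_eq_zero_iff k p] at this
    have := Nat.le_of_dvd (by norm_num) this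
    omega

theorem spec_deg (p : ℕ) [Fact p.Prime] [CharP k p] (m : ℕ) (hm : 2 * m + 1 = p) (hm1 : 2 ≤ m) (s t e1 e2 e3 : k)
    (h12 : e1 ≠ e2) (h13 : e1 ≠ e3) (h23 : e2 ≠ e3) (hsum : e1 + e2 + e3 = 0)
    (hs : s = e1 * e2 + e1 * e3 + e2 * e3) (ht : t = -(e1 * e2 * e3))
    (F : k[X]) (hF : derivative F = (X ^ 3 + C s * X + C t) ^ m)
    (T : k[X]) (hT : T.comp (X ^ p) = (Wc s t).preΨ p) : T.degree = 0 := by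
  obtain ⟨h2k, h3k⟩ := two_three_ne (k := k) p (by omega)
  by_contra hd
  obtain ⟨X0, hX0⟩ := IsAlgClosed.exists_root T hd
  obtain ⟨x0, hx0⟩ := IsAlgClosed.exists_pow_nat_eq X0 (n := p) (by omega)
  obtain ⟨y0, hy0⟩ := IsAlgClosed.exists_pow_nat_eq (x0 ^ 3 + s * x0 + t) (n := 2) (by omega)
  have he3 : e3 = -e1 - e2 := by linear_combination hsum
  have hΔ : (Wc s t).Δ ≠ 0 := by
    have : (Wc s t).Δ = (2 * 2) ^ 2 * ((e1 - e2) * (e1 - e3) * (e2 - e3)) ^ 2 := by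
      simp only [WeierstrassCurve.Δ, Wc, b₂, b₄, b₆, b₈]
      rw [hs, ht, he3]; ring
    rw [this]
    exact mul_ne_zero (pow_ne_zero _ (mul_ne_zero h2k h2k))
      (pow_ne_zero _ (mul_ne_zero (mul_ne_zero (sub_ne_zero.2 h12) (sub_ne_zero.2 h13)) (sub_ne_zero.2 h23)))
  have hns : Affine.Nonsingular (Wc s t) x0 y0 := by
    rw [← Affine.equation_iff_nonsingular_of_Δ_ne_zero hΔ, Affine.equation_iff]
    simp only [Wc]
    linear_combination hy0
  have hroot : ((Wc s t).preΨ p).eval x0 = 0 := by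
    rw [← hT, eval_comp, eval_pow, eval_X, hx0]; exact hX0
  have hP := torsion_of_root h2k hns p Fact.out ⟨m, hm.symm⟩ hroot
  exact no_tors p m hm (by omega) hns hP e1 e2 h12 (by rw [hs, ht, he3]; ring) (by rw [hs, ht, he3]; ring) F hF
end

/-- the specialization hom -/
noncomputable def phi (p : ℕ) {R : Type*} [CommRing R] [CharP R p] (s t : R) :
    MvPolynomial (Fin 2) (ZMod p) →+* R :=
  MvPolynomial.eval₂Hom (ZMod.castHom (dvd_refl p) R) ![s, t]

theorem phi_theta (p : ℕ) {R : Type*} [CommRing R] [CharP R p] (s t : R)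
    (W0 : WeierstrassCurve (MvPolynomial (Fin 2) ℤ))
    (hW0 : W0 = Wc (MvPolynomial.X 0) (MvPolynomial.X 1))
    (θ : Polynomial (MvPolynomial (Fin 2) (ZMod p)))
    (hθ : θ.comp (Polynomial.X ^ p) =
      (W0.preΨ (p : ℤ)).map (MvPolynomial.map (Int.castRingHom (ZMod p)))) :
    (θ.map (phi p s t)).comp (X ^ p) = (Wc s t).preΨ p := by
  have : (θ.map (phi p s t)).comp (X ^ p) = (θ.comp (X ^ p)).map (phi p s t) := by
    rw [map_comp]; simp
  rw [this, hθ, Polynomial.map_map, ← WeierstrassCurve.map_preΨ]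
  congr 1
  rw [hW0]
  simp [Wc, WeierstrassCurve.map, phi]

section
variable {k : Type*} [Field k] [DecidableEq k] [IsAlgClosed k]

theorem family (p : ℕ) [Fact p.Prime] [CharP k p] (m : ℕ) (hm : 2 * m + 1 = p) (hm1 : 2 ≤ m)
    (W0 : WeierstrassCurve (MvPolynomial (Fin 2) ℤ))
    (hW0 : W0 = Wc (MvPolynomial.X 0) (MvPolynomial.X 1))
    (θ : Polynomial (MvPolynomial (Fin 2) (ZMod p)))
    (hdeg : θ.natDegree = m)
    (hθ : θ.comp (Polynomial.X ^ p) =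
      (W0.preΨ (p : ℤ)).map (MvPolynomial.map (Int.castRingHom (ZMod p)))) :
    ∃ (s t : k[X]) (l : k), (∀ j, 1 ≤ j → (X - C l) ∣ phi p s t (θ.coeff j)) ∧
      ¬ (X - C l) ∣ phi p s t (θ.coeff 0) ∧ ¬ (X - C l) ^ 2 ∣ phi p s t (θ.coeff m) := by
  obtain ⟨h2k, h3k⟩ := two_three_ne (k := k) p (by omega)
  have hp : p.Prime := Fact.out
  have ha0 : θ.coeff m ≠ 0 := by
    rw [← hdeg, coeff_natDegree, Ne, leadingCoeff_eq_zero]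
    rintro rfl
    simp at hdeg; omega
  -- a good point
  obtain ⟨s1, t1, ha1, hD⟩ : ∃ s1 t1 : k, phi p s1 t1 (θ.coeff m) ≠ 0 ∧ 4 * s1 ^ 3 + 27 * t1 ^ 2 ≠ 0 := by
    by_contra hcon
    push Not at hcon
    have hinj : Function.Injective (MvPolynomial.map (σ := Fin 2) (ZMod.castHom (dvd_refl p) k)) :=
      MvPolynomial.map_injective _ (RingHom.injective _)
    have hz : MvPolynomial.map (ZMod.castHom (dvd_refl p) k) (θ.coeff m) *
        (4 * MvPolynomial.X 0 ^ 3 + 27 * MvPolynomial.X 1 ^ 2 : MvPolynomial (Fin 2) k) = 0 := by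
      apply MvPolynomial.funext
      intro v
      rw [map_mul, MvPolynomial.eval_map, map_zero]
      by_cases h0 : phi p (v 0) (v 1) (θ.coeff m) = 0
      · have : MvPolynomial.eval₂ (ZMod.castHom (dvd_refl p) k) v (θ.coeff m) = phi p (v 0) (v 1) (θ.coeff m) := by
          unfold phi
          rw [MvPolynomial.coe_eval₂Hom]
          congr 1
          funext i; fin_cases i <;> rfl
        rw [this, h0, zero_mul]
      · have := hcon _ _ h0
        simp only [map_add, map_mul, map_pow, map_ofNat, MvPolynomial.eval_X]
        rw [this, mul_zero]
    rcases mul_eq_zero.1 hz with h | h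
    · exact ha0 (hinj (by rw [h, map_zero]))
    · have := congrArg (MvPolynomial.eval ![(1 : k), 0]) h
      simp at this
      have h4 : (4 : k) = 2 * 2 := by norm_num
      rw [h4] at this
      exact mul_ne_zero h2k h2k this
  obtain ⟨e1, he1⟩ := IsAlgClosed.exists_root (C 1 * X ^ 3 + C 0 * X ^ 2 + C s1 * X + C t1 : k[X])
    (by rw [degree_cubic one_ne_zero]; decide)
  have he1 : e1 ^ 3 + s1 * e1 + t1 = 0 := by simpa [IsRoot] using he1
  obtain ⟨e2, he2⟩ := IsAlgClosed.exists_root (C 1 * X ^ 2 + C e1 * X + C (e1 ^ 2 + s1) : k[X])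
    (by rw [degree_quadratic one_ne_zero]; decide)
  have he2 : e2 ^ 2 + e1 * e2 + (e1 ^ 2 + s1) = 0 := by simpa [IsRoot] using he2
  have he12 : e2 - e1 ≠ 0 := by
    intro h
    have h' : e2 = e1 := by linear_combination h
    rw [h'] at he2
    have hs1 : s1 = -3 * e1 ^ 2 := by linear_combination he2
    rw [hs1] at he1 hD
    have ht1 : t1 = 2 * e1 ^ 3 := by linear_combination he1
    rw [ht1] at hD
    apply hD; ring
  obtain ⟨d, hd⟩ : ∃ d, d = e2 - e1 := ⟨_, rfl⟩
  rw [← hd] at he12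
  -- the family
  obtain ⟨c, hc⟩ : ∃ c : k[X], c = C (-(d / 3)) * (1 + X) := ⟨_, rfl⟩
  obtain ⟨f2, hf2⟩ : ∃ c' : k[X], c' = c + C d := ⟨_, rfl⟩
  obtain ⟨f3, hf3⟩ : ∃ c' : k[X], c' = c + C d * X := ⟨_, rfl⟩
  have hcd : c.natDegree ≤ 1 := by rw [hc]; compute_degree
  have hf2d : f2.natDegree ≤ 1 := by
    rw [hf2]; exact natDegree_add_le_of_degree_le hcd (by simp)
  have hf3d : f3.natDegree ≤ 1 := by
    rw [hf3]; exact natDegree_add_le_of_degree_le hcd (by compute_degree)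
  obtain ⟨s, hs⟩ : ∃ s : k[X], s = c * f2 + c * f3 + f2 * f3 := ⟨_, rfl⟩
  obtain ⟨t, ht⟩ : ∃ t : k[X], t = -(c * f2 * f3) := ⟨_, rfl⟩
  have hsd : s.natDegree ≤ 2 := by
    rw [hs]
    exact natDegree_add_le_of_degree_le (natDegree_add_le_of_degree_le (natDegree_mul_le_of_le hcd hf2d)
      (natDegree_mul_le_of_le hcd hf3d)) (natDegree_mul_le_of_le hf2d hf3d)
  have htd : t.natDegree ≤ 3 := by
    rw [ht, natDegree_neg]
    exact natDegree_mul_le_of_le (natDegree_mul_le_of_le hcd hf2d) hf3d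
  have hev : ∀ (l : k), (evalRingHom l).comp (phi p s t) = phi p (s.eval l) (t.eval l) := by
    intro l
    apply MvPolynomial.ringHom_ext'
    · exact Subsingleton.elim _ _
    · intro i
      fin_cases i <;> simp [phi]
  have hspec := phi_theta p s t W0 hW0 θ hθ
  have hacoeff : phi p s t (θ.coeff m) = ((Wc s t).preΨ p).coeff (p * m) := by
    rw [← hspec, ← expand_eq_comp_X_pow, mul_comm p m, coeff_expand_mul hp.pos, coeff_map]
  have hadeg : (phi p s t (θ.coeff m)).natDegree ≤ m := by
    rw [hacoeff]; exact lead_bound hsd htd p m hm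
  have ha : phi p s t (θ.coeff m) ≠ 0 := by
    intro h0
    apply ha1
    obtain ⟨l1, hl1⟩ : ∃ l1, l1 = (-e1 - e2 - e1) / d := ⟨_, rfl⟩
    have hl1' : d * l1 = -e1 - e2 - e1 := by rw [hl1]; field_simp
    have hc1 : c.eval l1 = e1 := by
      rw [hc]
      simp only [eval_mul, eval_C, eval_add, eval_one, eval_X]
      field_simp
      linear_combination -hl1' - hd
    have hf21 : f2.eval l1 = e2 := by
      rw [hf2, eval_add, hc1, eval_C, hd]; ring
    have hf31 : f3.eval l1 = -e1 - e2 := by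
      rw [hf3, eval_add, hc1, eval_mul, eval_C, eval_X, hl1']; ring
    have hs1 : s.eval l1 = s1 := by
      rw [hs]; simp only [eval_add, eval_mul, hc1, hf21, hf31]
      linear_combination -he2
    have ht1 : t.eval l1 = t1 := by
      rw [ht]; simp only [eval_neg, eval_mul, hc1, hf21, hf31]
      linear_combination e1 * he2 - he1
    rw [← hs1, ← ht1, ← hev, RingHom.comp_apply, h0, map_zero]
  have hcoef : ∀ l : k, (Hs k m).eval l = 0 → (θ.map (phi p (s.eval l) (t.eval l))).degree = 0 := by
    intro l hl
    have hl0 : l ≠ 0 := by rintro rfl; rw [Hs_zero] at hl; exact one_ne_zero hl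
    have hl1 : l ≠ 1 := by
      rintro rfl; exact Hs_one p m hm hl
    obtain ⟨F, hF⟩ := exists_int p m hm (c.eval l) d l hl
    have hE2 : f2.eval l = c.eval l + d := by rw [hf2]; simp
    have hE3 : f3.eval l = c.eval l + d * l := by rw [hf3]; simp
    have hE1 : c.eval l * 3 = -(d * (1 + l)) := by
      rw [hc]; simp only [eval_mul, eval_C, eval_add, eval_one, eval_X]; field_simp
    have hsum : c.eval l + f2.eval l + f3.eval l = 0 := by
      rw [hE2, hE3]; linear_combination hE1
    have hsl : s.eval l = c.eval l * f2.eval l + c.eval l * f3.eval l + f2.eval l * f3.eval l := by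
      rw [hs]; simp
    have htl : t.eval l = -(c.eval l * f2.eval l * f3.eval l) := by
      rw [ht]; simp
    refine spec_deg p m hm hm1 (s.eval l) (t.eval l) (c.eval l) (f2.eval l) (f3.eval l) ?_ ?_ ?_ hsum hsl htl F ?_ _
      (phi_theta p _ _ W0 hW0 θ hθ)
    · rw [hE2]; intro h; apply he12; linear_combination -h
    · rw [hE3]; intro h; apply mul_ne_zero he12 hl0; linear_combination -h
    · rw [hE2, hE3]; intro h; apply mul_ne_zero he12 (sub_ne_zero.2 hl1); linear_combination -h
    · rw [hF, hsl, htl, ← hE2, ← hE3]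
      congr 1
      have hsumC : C (c.eval l) + C (f2.eval l) + C (f3.eval l) = 0 := by
        rw [← C_add, ← C_add, hsum, C_0]
      simp only [C_add, C_neg, C_mul]
      linear_combination -X ^ 2 * hsumC
  have hroots : ∀ l : k, (Hs k m).eval l = 0 → ∀ j, 1 ≤ j → (phi p s t (θ.coeff j)).eval l = 0 := by
    intro l hl j hj
    have h1 := hcoef l hl
    have h2 : (θ.map (phi p (s.eval l) (t.eval l))).coeff j = 0 :=
      coeff_eq_zero_of_degree_lt (by rw [h1]; exact_mod_cast hj)
    rw [coeff_map, ← hev] at h2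
    exact h2
  have hcard := Hs_card (k := k) p m hm (by omega)
  have hH0 : Hs k m ≠ 0 := by
    intro h; have := Hs_zero (k := k) m; rw [h] at this; simp at this
  obtain ⟨l, hl⟩ : (Hs k m).roots.toFinset.Nonempty := by
    rw [← Finset.card_pos]; omega
  have hl' : (Hs k m).eval l = 0 := by
    rw [Multiset.mem_toFinset, mem_roots hH0] at hl; exact hl
  refine ⟨s, t, l, ?_, ?_, ?_⟩
  · intro j hj
    rw [dvd_iff_isRoot]
    exact hroots l hl' j hj
  · rw [dvd_iff_isRoot]
    intro h
    have h1 := hcoef l hl'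
    have h2 : (θ.map (phi p (s.eval l) (t.eval l))).coeff 0 = 0 := by
      rw [coeff_map, ← hev]; exact h
    rw [eq_C_of_degree_eq_zero h1, h2, C_0, degree_zero] at h1
    exact absurd h1 (by decide)
  · rintro ⟨b, hb⟩
    have hb1 : phi p s t (θ.coeff m) = (X - C l) * ((X - C l) * b) := by rw [hb]; ring
    have hne : (X - C l) * b ≠ 0 := by
      intro h; rw [h, mul_zero] at hb1; exact ha hb1
    apply hne
    apply eq_zero_of_natDegree_lt_card_of_eval_eq_zero' _ (Hs k m).roots.toFinset
    · intro l2 hl2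
      by_cases h : l2 = l
      · rw [h]; simp
      · have hl2' : (Hs k m).eval l2 = 0 := by
          rw [Multiset.mem_toFinset, mem_roots hH0] at hl2; exact hl2
        have h3 := hroots l2 hl2' m (by omega)
        rw [hb1, eval_mul] at h3
        rcases mul_eq_zero.1 h3 with h4 | h4
        · exfalso; apply h; simpa [sub_eq_zero] using h4
        · exact h4
    · rw [hb1, natDegree_mul (X_sub_C_ne_zero l) hne, natDegree_X_sub_C] at hadeg
      omega
end

theorem natDegree_reverse_of {R : Type*} [Semiring R] (g : R[X]) (h : g.coeff 0 ≠ 0) :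
    g.reverse.natDegree = g.natDegree := by
  rw [reverse_natDegree, natTrailingDegree_eq_zero.2 (Or.inr h), Nat.sub_zero]

theorem irreducible_of_reverse {F : Type*} [Field F] (g : F[X]) (h0 : g.coeff 0 ≠ 0) (h : Irreducible g.reverse) :
    Irreducible g := by
  have key : ∀ a : F[X], a.coeff 0 ≠ 0 → (IsUnit a ↔ IsUnit a.reverse) := by
    intro a ha
    have ha0 : a ≠ 0 := by rintro rfl; simp at ha
    have har : a.reverse ≠ 0 := by rwa [Ne, reverse_eq_zero]
    rw [isUnit_iff_degree_eq_zero, isUnit_iff_degree_eq_zero, degree_eq_natDegree ha0, degree_eq_natDegree har,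
      natDegree_reverse_of a ha]
  refine ⟨fun hu => h.not_isUnit ((key g h0).1 hu), ?_⟩
  intro a b hab
  rw [hab, mul_coeff_zero] at h0
  have ha := left_ne_zero_of_mul h0
  have hb := right_ne_zero_of_mul h0
  rw [key a ha, key b hb]
  apply h.isUnit_or_isUnit
  rw [hab, reverse_mul_of_domain]

theorem reverse_eisenstein {D : Type*} [CommRing D] [IsDomain D] [UniqueFactorizationMonoid D]
    (P : Ideal D) (hP : P.IsPrime) (g : D[X]) (m : ℕ) (hm : 1 ≤ m) (hd : g.natDegree ≤ m)
    (hj : ∀ j, 1 ≤ j → g.coeff j ∈ P) (h0 : g.coeff 0 ∉ P) (hl : g.coeff m ∉ P ^ 2) :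
    Irreducible (g.map (algebraMap D (FractionRing D))) := by
  classical
  letI : NormalizedGCDMonoid D := Nonempty.some inferInstance
  have hinj : Function.Injective (algebraMap D (FractionRing D)) := IsFractionRing.injective D (FractionRing D)
  have hdm : g.natDegree = m := by
    refine le_antisymm hd (le_natDegree_of_ne_zero ?_)
    intro h; rw [h] at hl; exact hl (zero_mem _)
  have h00 : g.coeff 0 ≠ 0 := by intro h; rw [h] at h0; exact h0 (zero_mem _)
  apply irreducible_of_reverse
  · rw [coeff_map, Ne, map_eq_zero_iff _ hinj]; exact h00
  have hrm : (g.map (algebraMap D (FractionRing D))).reverse = g.reverse.map (algebraMap D (FractionRing D)) := by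
    rw [reverse, reverse, reflect_map, natDegree_map_eq_of_injective hinj]
  rw [hrm]
  have hr0 : g.reverse ≠ 0 := by
    rw [Ne, reverse_eq_zero]; rintro rfl; simp at h00
  have hrd : g.reverse.natDegree = m := by rw [natDegree_reverse_of g h00, hdm]
  have hrc : ∀ j, j ≤ m → g.reverse.coeff j = g.coeff (m - j) := by
    intro j hj
    rw [coeff_reverse, hdm, revAt_le hj]
  obtain ⟨c, hc⟩ : ∃ c, c = g.reverse.content := ⟨_, rfl⟩
  obtain ⟨r, hr⟩ : ∃ r, r = g.reverse.primPart := ⟨_, rfl⟩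
  have hgr : g.reverse = C c * r := by rw [hc, hr]; exact eq_C_content_mul_primPart _
  have hrp : r.IsPrimitive := by rw [hr]; exact isPrimitive_primPart _
  have hco : ∀ j, j ≤ m → g.coeff (m - j) = c * r.coeff j := by
    intro j hj
    rw [← hrc j hj, hgr, coeff_C_mul]
  have hc0 : c ≠ 0 := by
    rintro rfl; rw [C_0, zero_mul] at hgr; exact hr0 hgr
  have hrdeg : r.natDegree = m := by
    rw [← hrd, hgr, natDegree_C_mul hc0]
  have hlead : g.coeff 0 = c * r.coeff m := by
    have := hco m le_rfl
    rwa [Nat.sub_self] at this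
  have hcP : c ∉ P := fun h => h0 (by rw [hlead]; exact P.mul_mem_right _ h)
  have hrn0 : r ≠ 0 := hrp.ne_zero
  have hirr : Irreducible r := by
    apply irreducible_of_eisenstein_criterion hP
    · rw [leadingCoeff, hrdeg]
      intro h; exact h0 (by rw [hlead]; exact P.mul_mem_left _ h)
    · intro n hn
      rw [degree_eq_natDegree hrn0, hrdeg] at hn
      have hn' : n < m := by exact_mod_cast hn
      have h1 := hj (m - n) (by omega)
      rw [hco n hn'.le] at h1
      exact (hP.mem_or_mem h1).resolve_left hcP
    · rw [← natDegree_pos_iff_degree_pos, hrdeg]; omega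
    · intro h
      apply hl
      have := hco 0 (by omega)
      rw [Nat.sub_zero] at this
      rw [this]
      exact Ideal.mul_mem_left _ _ h
    · exact hrp
  rw [hrp.irreducible_iff_irreducible_map_fraction_map (K := FractionRing D)] at hirr
  rw [hgr, Polynomial.map_mul, map_C]
  have hu : IsUnit (C (algebraMap D (FractionRing D) c)) := by
    rw [isUnit_C, isUnit_iff_ne_zero, Ne, map_eq_zero_iff _ hinj]; exact hc0
  exact (irreducible_isUnit_mul hu).2 hirr

theorem theta_aux (p : ℕ) (hp : p.Prime) (hp5 : 5 ≤ p)
    (K : Type*) [Field K] [CharP K p]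
    (W0 : WeierstrassCurve (MvPolynomial (Fin 2) ℤ))
    (hW0 : W0 = Wc (MvPolynomial.X 0) (MvPolynomial.X 1))
    (θ : Polynomial (MvPolynomial (Fin 2) (ZMod p)))
    (hdeg : θ.natDegree = (p - 1) / 2)
    (hθ : θ.comp (Polynomial.X ^ p) =
      (W0.preΨ (p : ℤ)).map (MvPolynomial.map (Int.castRingHom (ZMod p)))) :
    Irreducible (θ.map
      ((algebraMap (MvPolynomial (Fin 2) K) (FractionRing (MvPolynomial (Fin 2) K))).comp
        (MvPolynomial.map (ZMod.castHom (dvd_refl p) K)))) := by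
  classical
  haveI : Fact p.Prime := ⟨hp⟩
  obtain ⟨m, hm⟩ : Odd p := hp.odd_of_ne_two (by omega)
  have hdeg' : θ.natDegree = m := by omega
  haveI : CharP (AlgebraicClosure K) p := charP_of_injective_algebraMap (algebraMap K (AlgebraicClosure K)).injective p
  obtain ⟨s, t, l, h1, h2, h3⟩ := family (k := AlgebraicClosure K) p m hm.symm (by omega) W0 hW0 θ hdeg' hθ
  rw [← Polynomial.map_map]
  let q : MvPolynomial (Fin 2) K →+* (AlgebraicClosure K)[X] :=
    MvPolynomial.eval₂Hom ((C : AlgebraicClosure K →+* _).comp (algebraMap K (AlgebraicClosure K))) ![s, t]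
  have hq : q.comp (MvPolynomial.map (ZMod.castHom (dvd_refl p) K)) = phi p s t := by
    apply MvPolynomial.ringHom_ext'
    · exact Subsingleton.elim _ _
    · intro i
      simp [q, phi]
  have hq' : ∀ a, q (MvPolynomial.map (ZMod.castHom (dvd_refl p) K) a) = phi p s t a := fun a => by
    rw [← hq]; rfl
  have hpr : (Ideal.span {X - C l} : Ideal (AlgebraicClosure K)[X]).IsPrime := by
    rw [Ideal.span_singleton_prime (X_sub_C_ne_zero l)]; exact prime_X_sub_C l
  refine reverse_eisenstein (Ideal.comap q (Ideal.span {X - C l})) (Ideal.comap_isPrime _ _) _ m (by omega)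
    (natDegree_map_le.trans hdeg'.le) ?_ ?_ ?_
  · intro j hj
    rw [coeff_map, Ideal.mem_comap, hq', Ideal.mem_span_singleton]
    exact h1 j hj
  · rw [coeff_map, Ideal.mem_comap, hq', Ideal.mem_span_singleton]
    exact h2
  · intro h
    rw [coeff_map] at h
    have := Ideal.le_comap_pow q 2 h
    rw [Ideal.mem_comap, hq', Ideal.span_singleton_pow, Ideal.mem_span_singleton] at this
    exact h3 this

/-- The polynomial `θ_{s,t}(X)` of degree `(p-1)/2`, with `θ_{s,t}(x^p) = ψ_{p,s,t}(x) mod p`,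
is irreducible over the rational function field `K(s,t)`. -/
theorem theta_irreducible (p : ℕ) (hp : p.Prime) (hp5 : 5 ≤ p)
    (K : Type*) [Field K] [CharP K p]
    (θ : Polynomial (MvPolynomial (Fin 2) (ZMod p)))
    (hdeg : θ.natDegree = (p - 1) / 2)
    (hθ : θ.comp (Polynomial.X ^ p) =
      ((Wst ℤ).preΨ (p : ℤ)).map (MvPolynomial.map (Int.castRingHom (ZMod p)))) :
    Irreducible (θ.map
      ((algebraMap (MvPolynomial (Fin 2) K) (FractionRing (MvPolynomial (Fin 2) K))).comp
        (MvPolynomial.map (ZMod.castHom (dvd_refl p) K)))) := by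
  exact theta_aux p hp hp5 K (Wst ℤ) rfl θ hdeg hθ
end

section
/- Let p ≥ 3 be a prime and K a field of characteristic p. Define σ_{s,t,x̃}(x) := −(ψ_{p+1,s,t}·ψ_{p−1,s,t})(x) + x·ψ_{p,s,t}²(x) − x̃·ψ_{p,s,t}²(x), whose zeros are the x-coordinates of points S on E_{s,t} with x([p]S) = x̃. Then the mod-p reduction of σ_{s,t,x̃}(x) is a monic polynomial of degree p² in x that is a polynomial in x^p; that is, there exists η_{s,t,x̃}(X) = X^p + Σ_{i=1}^{p−1}(b_{pi} + x̃·c_{pi−1}) X^{p−i} + (b_{p²} + x̃·c_{p²−1}) with b_k, c_k ∈ F_p[s,t] weight-homogeneous of weight k such that η_{s,t,x̃}(x^p) = σ_{s,t,x̃}(x) mod p. -/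
open WeierstrassCurve Polynomial

/-- The polynomial `σ_{s,t,x̃}(x) = -(ψ_{p+1}ψ_{p-1})(x) + (x - x̃)·ψ_p²(x)` mod `p`, whose
zeros are the `x`-coordinates of points `S` with `x([p]S) = x̃`; an element of
`(F_p[s,t][x̃])[x]`, where the extra variable `x̃` is `Polynomial.X` of the coefficient ring. -/
noncomputable def sigmaP (p : ℕ) [Fact p.Prime] :
    Polynomial (Polynomial (MvPolynomial (Fin 2) (ZMod p))) :=
  ((Wst (ZMod p)).Φ (p : ℤ)).map (Polynomial.C) -
    Polynomial.C (Polynomial.X) * ((Wst (ZMod p)).ΨSq (p : ℤ)).map (Polynomial.C)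


namespace EtaAux

set_option linter.unusedSectionVars false

open WeierstrassCurve.Affine

/-- The short Weierstrass curve. -/
def sw {F : Type*} [CommRing F] (s t : F) : WeierstrassCurve F := ⟨0, 0, 0, s, t⟩

section FieldPart

variable {F : Type*} [Field F] [DecidableEq F] {s t : F}

/-- `Q` is the affine point `(a, b)`. -/
def At (Q : (sw s t).toAffine.Point) (a b : F) : Prop :=
  ∃ h : (sw s t).toAffine.Nonsingular a b, Q = Point.some a b h

lemma at_of_eq {a b a' b' : F} (h : (sw s t).toAffine.Nonsingular a b) (ha : a = a')
    (hb : b = b') : At (Point.some a b h) a' b' := by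
  subst ha hb
  exact ⟨h, rfl⟩

lemma At.eqn {Q : (sw s t).toAffine.Point} {a b : F} (h : At Q a b) :
    b ^ 2 = a ^ 3 + s * a + t := by
  obtain ⟨h, -⟩ := h
  have := (WeierstrassCurve.Affine.equation_iff _ _).mp h.1
  simp [sw] at this
  linear_combination this

lemma At.unique {Q : (sw s t).toAffine.Point} {a b c d : F} (h : At Q a b) (h' : At Q c d) :
    a = c ∧ b = d := by
  obtain ⟨h, rfl⟩ := h
  obtain ⟨h', e⟩ := h'
  simpa using e

lemma At.neg {Q : (sw s t).toAffine.Point} {a b : F} (h : At Q a b) : At (-Q) a (-b) := by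
  obtain ⟨h, rfl⟩ := h
  have hn : (sw s t).toAffine.negY a b = -b := by simp [negY, sw]
  exact at_of_eq ((nonsingular_neg ..).mpr h) rfl hn

lemma At.add {Q R : (sw s t).toAffine.Point} {a b c d l : F} (h : At Q a b) (h' : At R c d)
    (hac : a ≠ c) (hl : l * (a - c) = b - d) :
    At (Q + R) (l ^ 2 - a - c) (l * (a - (l ^ 2 - a - c)) - b) := by
  obtain ⟨h, rfl⟩ := h
  obtain ⟨h', rfl⟩ := h'
  have hxy : ¬(a = c ∧ b = (sw s t).toAffine.negY c d) := fun e => hac e.1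
  rw [Point.add_some hxy]
  have hs : (sw s t).toAffine.slope a c b d = l := by
    rw [slope_of_X_ne hac, div_eq_iff (sub_ne_zero.mpr hac), hl]
  have hx : (sw s t).toAffine.addX a c ((sw s t).toAffine.slope a c b d) = l ^ 2 - a - c := by
    rw [hs]; simp [addX, sw]
  have hy : (sw s t).toAffine.addY a c b ((sw s t).toAffine.slope a c b d) =
      l * (a - (l ^ 2 - a - c)) - b := by
    rw [hs]; simp [addX, addY, negAddY, negY, sw]; ring
  exact at_of_eq _ hx hy

lemma At.dbl {Q : (sw s t).toAffine.Point} {a b l : F} (h : At Q a b)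
    (hb : 2 * b ≠ 0) (hl : l * (2 * b) = 3 * a ^ 2 + s) :
    At (Q + Q) (l ^ 2 - a - a) (l * (a - (l ^ 2 - a - a)) - b) := by
  obtain ⟨h, rfl⟩ := h
  have hn : (sw s t).toAffine.negY a b = -b := by simp [negY, sw]
  have hy : b ≠ (sw s t).toAffine.negY a b := by
    rw [hn]; intro e; apply hb; linear_combination e
  have hxy : ¬(a = a ∧ b = (sw s t).toAffine.negY a b) := fun e => hy e.2
  rw [Point.add_some hxy]
  have hs : (sw s t).toAffine.slope a a b b = l := by
    rw [slope_of_Y_ne rfl hy, div_eq_iff (sub_ne_zero.mpr hy), hn]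
    simp [sw]; linear_combination -hl
  have hx : (sw s t).toAffine.addX a a ((sw s t).toAffine.slope a a b b) = l ^ 2 - a - a := by
    rw [hs]; simp [addX, sw]
  have hy : (sw s t).toAffine.addY a a b ((sw s t).toAffine.slope a a b b) =
      l * (a - (l ^ 2 - a - a)) - b := by
    rw [hs]; simp [addX, addY, negAddY, negY, sw]; ring
  exact at_of_eq _ hx hy

/-- difference formula -/
lemma At.diff {Q R : (sw s t).toAffine.Point} {a b c d x₁ y₁ x₂ y₂ : F}
    (h : At Q a b) (h' : At R c d) (hac : a ≠ c) (hp : At (Q + R) x₁ y₁) (hm : At (Q - R) x₂ y₂) :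
    (x₂ - x₁) * (a - c) ^ 2 = 4 * b * d ∧
    (x₁ + x₂) * (a - c) ^ 2 = 2 * (a * c + s) * (a + c) + 4 * t ∧
    x₁ * x₂ * (a - c) ^ 2 = (a * c - s) ^ 2 - 4 * t * (a + c) := by
  have hac' := sub_ne_zero.mpr hac
  have e₁ := h.add (l := (b - d) / (a - c)) h' hac (by field_simp)
  rw [sub_eq_add_neg] at hm
  have e₂ := h.add (l := (b - -d) / (a - c)) h'.neg hac (by field_simp)
  have q₁ := (hp.unique e₁).1
  have q₂ := (hm.unique e₂).1
  have E₁ := h.eqn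
  have E₂ := h'.eqn
  subst q₁ q₂
  refine ⟨by field_simp; ring, ?_, ?_⟩
  · field_simp
    linear_combination (2 : F) * E₁ + 2 * E₂
  · have : (((b - d) / (a - c)) ^ 2 - a - c) * (((b - -d) / (a - c)) ^ 2 - a - c) * (a - c) ^ 2 =
      ((b ^ 2 - d ^ 2) ^ 2 - 2 * (a + c) * (b ^ 2 + d ^ 2) * (a - c) ^ 2
        + (a + c) ^ 2 * (a - c) ^ 4) / (a - c) ^ 2 := by
      field_simp; ring
    rw [this, E₁, E₂]
    field_simp
    ring

lemma At.dup {Q : (sw s t).toAffine.Point} {a b x₁ y₁ : F}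
    (h : At Q a b) (hb : 2 * b ≠ 0) (hp : At (Q + Q) x₁ y₁) :
    x₁ * (4 * b ^ 2) = (a ^ 2 - s) ^ 2 - 8 * t * a := by
  have e₁ := h.dbl (l := (3 * a ^ 2 + s) / (2 * b)) hb (div_mul_cancel₀ _ hb)
  have q₁ := (hp.unique e₁).1
  have E₁ := h.eqn
  subst q₁
  have : (((3 * a ^ 2 + s) / (2 * b)) ^ 2 - a - a) * (4 * b ^ 2) =
      (3 * a ^ 2 + s) ^ 2 - 8 * a * b ^ 2 := by
    have h2 : (2 : F) ≠ 0 := left_ne_zero_of_mul hb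
    have h3 : b ≠ 0 := right_ne_zero_of_mul hb
    field_simp; ring
  rw [this, E₁]; ring


/-- The hypotheses on a generic point and its sequence of division values. -/
structure Gen (P : (sw s t).toAffine.Point) (x y : F) (ψ : ℕ → F) : Prop where
  at' : At P x y
  h0 : ψ 0 = 0
  h1 : ψ 1 = 1
  h2 : ψ 2 = 2 * y
  h3 : ψ 3 = 3 * x ^ 4 + 6 * s * x ^ 2 + 12 * t * x - s ^ 2
  h4 : ψ 4 = (2 * x ^ 6 + 10 * s * x ^ 4 + 40 * t * x ^ 3 - 10 * s ^ 2 * x ^ 2 - 8 * s * t * x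
    - 16 * t ^ 2 - 2 * s ^ 3) * (2 * y)
  odd : ∀ m, ψ (2 * (m + 1) + 1) = ψ (m + 3) * ψ (m + 1) ^ 3 - ψ m * ψ (m + 2) ^ 3
  even : ∀ m, ψ (2 * (m + 2)) * ψ 2 = ψ (m + 1) ^ 2 * ψ (m + 2) * ψ (m + 4) -
    ψ m * ψ (m + 2) * ψ (m + 3) ^ 2
  nz : ∀ m, ψ (m + 1) ≠ 0

variable {P : (sw s t).toAffine.Point} {x y : F} {ψ : ℕ → F}

/-- The formula for the first coordinate of the multiple `k + 1`. -/
def XX (P : (sw s t).toAffine.Point) (x : F) (ψ : ℕ → F) (k : ℕ) : Prop :=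
  ∃ a b, At ((k + 1) • P) a b ∧ (x - a) * ψ (k + 1) ^ 2 = ψ (k + 2) * ψ k

lemma Gen.Y (g : Gen P x y ψ) {k : ℕ} (H0 : XX P x ψ k) (H1 : XX P x ψ (k + 1))
    (H2 : XX P x ψ (k + 2)) {a b : F} (h : At ((k + 2) • P) a b) :
    2 * b * ψ (k + 2) ^ 4 = ψ (2 * (k + 2)) := by
  obtain ⟨a0, b0, e0, f0⟩ := H0
  obtain ⟨a1, b1, e1, f1⟩ := H1
  obtain ⟨a2, b2, e2, f2⟩ := H2
  simp only [add_assoc, Nat.reduceAdd] at e1 f1 e2 f2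
  obtain ⟨rfl, rfl⟩ := h.unique e1
  have hne : a ≠ x := by
    rintro rfl
    have := mul_ne_zero (g.nz (k + 2)) (g.nz k)
    apply this
    rw [← f1]; ring
  have hp : At ((k + 2) • P + P) a2 b2 := by
    rwa [← succ_nsmul]
  have hm : At ((k + 2) • P - P) a0 b0 := by
    rwa [show (k + 2) • P - P = (k + 1) • P by rw [succ_nsmul _ (k + 1)]; abel]
  obtain ⟨d1, d2, d3⟩ := h.diff g.at' hne hp hm
  have hy := g.nz 1
  have hev := g.even k
  apply mul_right_cancel₀ hy
  simp only [Nat.reduceAdd]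
  rw [hev]
  rw [g.h2]
  linear_combination (-ψ (k + 2) ^ 4) * d1 + (a0 - a2) * ((x - a) * ψ (k + 2) ^ 2 + ψ (k + 3) * ψ (k + 1)) * f1
    + ψ (k + 1) ^ 2 * f2 - ψ (k + 3) ^ 2 * f0

lemma Gen.Y1 (g : Gen P x y ψ) {a b : F} (h : At (1 • P) a b) :
    2 * b * ψ 1 ^ 4 = ψ (2 * 1) := by
  rw [one_nsmul] at h
  obtain ⟨rfl, rfl⟩ := h.unique g.at'
  simp [g.h1, g.h2]

lemma Gen.Y2 (g : Gen P x y ψ) {a b : F} (h : At (2 • P) a b) :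
    2 * b * ψ 2 ^ 4 = ψ (2 * 2) := by
  rw [two_nsmul] at h
  have hy := g.nz 1
  simp only [Nat.reduceAdd] at hy
  rw [g.h2] at hy
  obtain ⟨rfl, rfl⟩ := h.unique (g.at'.dbl (l := (3 * x ^ 2 + s) / (2 * y)) hy
    (div_mul_cancel₀ _ hy))
  rw [g.h2, g.h4]
  have h2 : (2 : F) ≠ 0 := left_ne_zero_of_mul hy
  have h3 : y ≠ 0 := right_ne_zero_of_mul hy
  have E := g.at'.eqn
  have : t = y ^ 2 - x ^ 3 - s * x := by linear_combination -E
  subst this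
  field_simp
  ring

lemma Gen.Xodd (g : Gen P x y ψ) {k : ℕ} {a b c d : F} (h : At ((k + 1) • P) a b)
    (h' : At ((k + 2) • P) c d)
    (f : (x - a) * ψ (k + 1) ^ 2 = ψ (k + 2) * ψ k)
    (f' : (x - c) * ψ (k + 2) ^ 2 = ψ (k + 3) * ψ (k + 1))
    (Y : 2 * b * ψ (k + 1) ^ 4 = ψ (2 * (k + 1)))
    (Y' : 2 * d * ψ (k + 2) ^ 4 = ψ (2 * (k + 2))) : XX P x ψ (2 * (k + 1)) := by
  have ho : ψ (2 * (k + 1) + 1) = ψ (k + 1) ^ 2 * ψ (k + 2) ^ 2 * (a - c) := by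
    rw [g.odd]
    linear_combination (-ψ (k + 1) ^ 2) * f' + ψ (k + 2) ^ 2 * f
  have hne : c ≠ a := by
    rintro rfl
    apply g.nz (2 * (k + 1))
    rw [ho]; ring
  have hm : At ((k + 2) • P - (k + 1) • P) x y := by
    rw [show (k + 2) • P - (k + 1) • P = P by rw [succ_nsmul _ (k + 1)]; abel]
    exact g.at'
  have hp := h'.add h hne (l := (d - b) / (c - a)) (div_mul_cancel₀ _ (sub_ne_zero.mpr hne))
  obtain ⟨d1, -, -⟩ := h'.diff h hne hp hm
  rw [← add_smul, show k + 2 + (k + 1) = 2 * (k + 1) + 1 by ring] at hp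
  refine ⟨_, _, hp, ?_⟩
  rw [show 2 * (k + 1) + 2 = 2 * (k + 2) by ring, ← Y, ← Y', ho]
  linear_combination ψ (k + 1) ^ 4 * ψ (k + 2) ^ 4 * d1

lemma Gen.Xeven (g : Gen P x y ψ) {k : ℕ} (H0 : XX P x ψ k) (H1 : XX P x ψ (k + 1))
    (H2 : XX P x ψ (k + 2)) : XX P x ψ (2 * (k + 1) + 1) := by
  obtain ⟨a1, b1, e1, f1⟩ := id H1
  have Y := g.Y H0 H1 H2 e1
  obtain ⟨a0, b0, e0, f0⟩ := H0
  obtain ⟨a2, b2, e2, f2⟩ := H2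
  simp only [add_assoc, Nat.reduceAdd] at e1 f1 e2 f2
  have hne : a1 ≠ x := by
    rintro rfl
    have := mul_ne_zero (g.nz (k + 2)) (g.nz k)
    apply this
    rw [← f1]; ring
  have hp : At ((k + 2) • P + P) a2 b2 := by
    rwa [← succ_nsmul]
  have hm : At ((k + 2) • P - P) a0 b0 := by
    rwa [show (k + 2) • P - P = (k + 1) • P by rw [succ_nsmul _ (k + 1)]; abel]
  obtain ⟨-, d2, d3⟩ := e1.diff g.at' hne hp hm
  have hb : 2 * b1 ≠ 0 := by
    intro hb
    rw [hb, zero_mul] at Y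
    exact g.nz (2 * k + 3) Y.symm
  have hd := e1.dbl hb (l := (3 * a1 ^ 2 + s) / (2 * b1)) (div_mul_cancel₀ _ hb)
  have hdup := e1.dup hb hd
  have E := e1.eqn
  rw [← add_smul, show k + 2 + (k + 2) = 2 * (k + 1) + 1 + 1 by ring] at hd
  refine ⟨_, _, hd, ?_⟩
  rw [show 2 * (k + 1) + 1 + 1 = 2 * (k + 2) by ring,
    show 2 * (k + 1) + 1 + 2 = 2 * (k + 2) + 1 by ring, ← Y]
  generalize ((3 * a1 ^ 2 + s) / (2 * b1)) ^ 2 - a1 - a1 = a at *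
  have ho : ψ (2 * (k + 2) + 1) = ψ (k + 2) ^ 2 * ψ (k + 3) ^ 2 * (a1 - a2) := by
    rw [g.odd (k + 1)]
    simp only [add_assoc, Nat.reduceAdd]
    linear_combination (-ψ (k + 2) ^ 2) * f2 + ψ (k + 3) ^ 2 * f1
  have ho' : ψ (2 * (k + 1) + 1) = ψ (k + 1) ^ 2 * ψ (k + 2) ^ 2 * (a0 - a1) := by
    rw [g.odd]
    linear_combination (-ψ (k + 1) ^ 2) * f1 + ψ (k + 2) ^ 2 * f0
  have key : 4 * b1 ^ 2 * (x - a) = (x - a1) ^ 2 * (a1 - a2) * (a0 - a1) := by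
    linear_combination -hdup + 4 * x * E - a1 * d2 + d3
  rw [ho, ho']
  linear_combination ψ (k + 2) ^ 8 * key + (a1 - a2) * (a0 - a1) * ψ (k + 2) ^ 4 *
    ((x - a1) * ψ (k + 2) ^ 2 + ψ (k + 3) * ψ (k + 1)) * f1

lemma Gen.X (g : Gen P x y ψ) (k : ℕ) : XX P x ψ k := by
  induction k using Nat.strong_induction_on with
  | _ k ih =>
    rcases k with _ | k
    · exact ⟨x, y, by simpa using g.at', by simp [g.h0]⟩
    rcases k with _ | k
    · have hy := g.nz 1
      simp only [Nat.reduceAdd] at hy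
      rw [g.h2] at hy
      have hd := g.at'.dbl (l := (3 * x ^ 2 + s) / (2 * y)) hy (div_mul_cancel₀ _ hy)
      have hdup := g.at'.dup hy hd
      rw [← two_nsmul] at hd
      refine ⟨_, _, hd, ?_⟩
      have E := g.at'.eqn
      simp only [zero_add, Nat.reduceAdd, g.h1, g.h2, g.h3]
      linear_combination -hdup + 4 * x * E
    rcases Nat.even_or_odd' k with ⟨m, rfl | rfl⟩
    · -- odd multiple `2 m + 3`
      obtain ⟨a, b, h, f⟩ := id (ih m (by omega))
      obtain ⟨c, d, h', f'⟩ := id (ih (m + 1) (by omega))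
      refine g.Xodd (k := m) h h' f f' ?_ ?_
      · rcases m with _ | m
        · exact g.Y1 h
        · exact g.Y (ih _ (by omega)) (ih _ (by omega)) (ih _ (by omega)) h
      · rcases m with _ | m
        · exact g.Y2 h'
        · exact g.Y (k := m + 1) (ih _ (by omega)) (ih _ (by omega)) (ih _ (by omega)) h'
    · exact g.Xeven (k := m) (ih _ (by omega)) (ih _ (by omega)) (ih _ (by omega))

lemma Gen.Yall (g : Gen P x y ψ) (k : ℕ) {a b : F} (h : At ((k + 1) • P) a b) :
    2 * b * ψ (k + 1) ^ 4 = ψ (2 * (k + 1)) := by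
  rcases k with _ | k
  · exact g.Y1 h
  · exact g.Y (g.X _) (g.X _) (g.X _) h

lemma Gen.deriv (g : Gen P x y ψ) (D : Derivation ℤ F F) (hs : D s = 0) (ht : D t = 0)
    (hx : D x = 2 * y) (k : ℕ) {a b : F} (h : At ((k + 1) • P) a b) :
    D a = 2 * ((k : F) + 1) * b := by
  have hy := g.nz 1
  simp only [Nat.reduceAdd] at hy
  rw [g.h2] at hy
  have Dsq : ∀ z : F, D (z ^ 2) = 2 * z * D z := by
    intro z; rw [D.leibniz_pow]; simp; ring
  have Dcu : ∀ z : F, D (z ^ 3) = 3 * z ^ 2 * D z := by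
    intro z; rw [D.leibniz_pow]; simp; ring
  have Dy : ∀ {u v n : F}, v ^ 2 = u ^ 3 + s * u + t → 2 * v ≠ 0 → D u = 2 * n * v →
      D v = n * (3 * u ^ 2 + s) := by
    intro u v n e hv hu
    have := congrArg D e
    rw [Dsq, map_add, map_add, Dcu, D.leibniz, hs, ht, hu] at this
    apply mul_left_cancel₀ hv
    rw [this]
    simp; ring
  induction k generalizing a b with
  | zero =>
    rw [zero_add, one_nsmul] at h
    obtain ⟨rfl, rfl⟩ := h.unique g.at'
    simp [hx]
  | succ k ih =>
    have Dyy : D y = 1 * (3 * x ^ 2 + s) := Dy g.at'.eqn hy (by rw [hx]; ring)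
    rcases k with _ | k
    · have l0 : (3 * x ^ 2 + s) / (2 * y) * (2 * y) = 3 * x ^ 2 + s := div_mul_cancel₀ _ hy
      generalize (3 * x ^ 2 + s) / (2 * y) = l at l0
      rw [zero_add, succ_nsmul, one_nsmul] at h
      obtain ⟨rfl, rfl⟩ := h.unique (g.at'.dbl hy l0)
      have Dl := congrArg D l0
      rw [show 2 * y = y + y by ring, show 3 * x ^ 2 = x ^ 2 + x ^ 2 + x ^ 2 by ring] at Dl
      simp only [D.leibniz, map_add, hs, Dsq, Dyy, hx, smul_eq_mul] at Dl
      have Dl' : D l = 6 * x - 2 * l ^ 2 := by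
        apply mul_left_cancel₀ hy
        linear_combination Dl + 2 * l * l0
      rw [map_sub, map_sub, Dsq, Dl', hx]
      push_cast
      ring
    · obtain ⟨c, d, e, f⟩ := g.X (k + 1)
      have hne : c ≠ x := by
        rintro rfl
        have := mul_ne_zero (g.nz (k + 2)) (g.nz k)
        apply this
        rw [sub_self, zero_mul] at f
        exact f.symm
      have hd : 2 * d ≠ 0 := by
        intro hb
        have Y := g.Yall _ e
        rw [hb, zero_mul] at Y
        exact g.nz (2 * k + 3) Y.symm
      have hc := ih e
      have Dd := Dy e.eqn hd hc
      have hne' := sub_ne_zero.mpr hne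
      have l0 : (d - y) / (c - x) * (c - x) = d - y := div_mul_cancel₀ _ hne'
      generalize (d - y) / (c - x) = l at l0
      have hsum := e.add g.at' hne l0
      rw [← succ_nsmul] at hsum
      obtain ⟨rfl, rfl⟩ := h.unique hsum
      have Dl := congrArg D l0
      simp only [D.leibniz, map_sub, hc, Dd, Dyy, hx, smul_eq_mul] at Dl
      have E := e.eqn
      have E' := g.at'.eqn
      have l1 : l * (d + y) = c ^ 2 + c * x + x ^ 2 + s := by
        apply mul_left_cancel₀ hne'
        linear_combination (d + y) * l0 + E - E'
      rw [Nat.cast_succ (k + 1)]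
      generalize (((k + 1 : ℕ) : F) + 1) = n at *
      have Dl' : D l = n * (2 * c + x - l ^ 2) + (2 * x + c - l ^ 2) := by
        apply mul_left_cancel₀ hne'
        linear_combination Dl - (n - 1) * l1 + (n + 1) * l * l0
      rw [map_sub, map_sub, Dsq, Dl', hx, hc]
      linear_combination (-2 : F) * l0

end FieldPart

section Generic

/-- The ring of integer polynomials in `s` and `t`. -/
abbrev BZ := MvPolynomial (Fin 2) ℤ
/-- The coordinate ring, as a polynomial ring in `s`, `x` and `y`. -/
abbrev AZ := MvPolynomial (Fin 3) ℤ

/-- The element `t`. -/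
noncomputable def tA : AZ :=
  MvPolynomial.X 2 ^ 2 - MvPolynomial.X 1 ^ 3 - MvPolynomial.X 0 * MvPolynomial.X 1

/-- The inclusion of the base ring. -/
noncomputable def baseA : BZ →+* AZ :=
  MvPolynomial.eval₂Hom (Int.castRingHom AZ) ![MvPolynomial.X 0, tA]

/-- The inclusion of polynomials in `s, t, x`. -/
noncomputable def phiA : BZ[X] →+* AZ := Polynomial.eval₂RingHom baseA (MvPolynomial.X 1)

/-- The defining polynomial of the quadratic extension. -/
noncomputable def gA : BZ[X][X] :=
  X ^ 2 - C (X ^ 3 + C (MvPolynomial.X 0) * X + C (MvPolynomial.X 1))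

lemma phiA_injective : Function.Injective phiA := by
  let ρ : AZ →+* AdjoinRoot gA := MvPolynomial.eval₂Hom (Int.castRingHom _)
    ![AdjoinRoot.of gA (C (MvPolynomial.X 0)), AdjoinRoot.of gA X, AdjoinRoot.root gA]
  have hroot : AdjoinRoot.root gA ^ 2 =
      AdjoinRoot.of gA (X ^ 3 + C (MvPolynomial.X 0) * X + C (MvPolynomial.X 1)) := by
    have := AdjoinRoot.eval₂_root gA
    rw [gA, eval₂_sub, eval₂_pow, eval₂_X, eval₂_C] at this
    exact sub_eq_zero.mp this
  have h : ρ.comp phiA = AdjoinRoot.of gA := by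
    apply Polynomial.ringHom_ext'
    · apply MvPolynomial.ringHom_ext'
      · exact RingHom.ext_int _ _
      · intro i
        fin_cases i
        · simp [phiA, baseA, ρ]
        · simp only [phiA, baseA, ρ, tA]
          simp [hroot]
          ring
    · simp [phiA, ρ]
  have hinj : Function.Injective (AdjoinRoot.of gA) := by
    apply AdjoinRoot.of.injective_of_degree_ne_zero
    unfold gA
    rw [degree_X_pow_sub_C (by norm_num)]
    norm_num
  rw [← h] at hinj
  exact Function.Injective.of_comp (f := ρ) (by simpa using hinj)

variable (FZ : Type) [Field FZ] [Algebra AZ FZ] [IsFractionRing AZ FZ]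

/-- The invariant derivation on the coordinate ring. -/
noncomputable def derA : Derivation ℤ AZ AZ :=
  MvPolynomial.mkDerivation ℤ ![0, 2 * MvPolynomial.X 2, 3 * MvPolynomial.X 1 ^ 2 + MvPolynomial.X 0]

/-- The derivation as a ring homomorphism to dual numbers. -/
noncomputable def dualA : AZ →+* TrivSqZeroExt FZ FZ where
  toFun a := TrivSqZeroExt.inl (algebraMap AZ FZ a) + TrivSqZeroExt.inr (algebraMap AZ FZ (derA a))
  map_one' := by ext <;> simp
  map_zero' := by ext <;> simp
  map_add' a b := by ext <;> simp [Algebra.smul_def]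
  map_mul' a b := by
    ext
    · simp
    · simp
      simp only [Algebra.smul_def]
      ring

lemma dualA_unit (a : nonZeroDivisors AZ) : IsUnit (dualA FZ a) := by
  rw [TrivSqZeroExt.isUnit_iff_isUnit_fst]
  simp [dualA]

/-- The extension to the function field. -/
noncomputable def dualF : FZ →+* TrivSqZeroExt FZ FZ := IsLocalization.lift (dualA_unit FZ)

lemma dualF_alg (a : AZ) : dualF FZ (algebraMap AZ FZ a) = dualA FZ a := IsLocalization.lift_eq _ _

lemma dualF_fst (a : FZ) : (dualF FZ a).fst = a := by
  have : ((TrivSqZeroExt.fstHom ℤ FZ FZ).toRingHom.comp (dualF FZ)) = RingHom.id FZ := by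
    apply IsLocalization.ringHom_ext (nonZeroDivisors AZ)
    refine RingHom.ext fun a => ?_
    simp [dualF_alg, dualA]
  exact congrArg (fun f => f a) this

/-- The invariant derivation on the function field. -/
noncomputable def derF : Derivation ℤ FZ FZ :=
  Derivation.mk' (AddMonoidHom.toIntLinearMap
    { toFun := fun a => (dualF FZ a).snd, map_zero' := by simp, map_add' := by simp }) (by
      intro a b
      simp [TrivSqZeroExt.snd_mul, dualF_fst, mul_comm])

lemma derF_alg (a : AZ) : derF FZ (algebraMap AZ FZ a) = algebraMap AZ FZ (derA a) := by
  change (dualF FZ (algebraMap AZ FZ a)).snd = _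
  rw [dualF_alg]; simp [dualA]
  simp only [Algebra.smul_def, mul_one]

lemma derA_t : derA tA = 0 := by
  simp [tA, derA, Derivation.leibniz, Derivation.leibniz_pow]
  ring

lemma derA_base (b : BZ) : derA (baseA b) = 0 := by
  induction b using MvPolynomial.induction_on with
  | C a => simp [baseA]
  | add p q hp hq => simp [hp, hq]
  | mul_X p i hp =>
    rw [map_mul, Derivation.leibniz, hp]
    fin_cases i
    · simp [baseA, derA]
    · simp [baseA, derA_t]

lemma derA_phi (q : BZ[X]) : derA (phiA q) = 2 * MvPolynomial.X 2 * phiA (derivative q) := by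
  induction q using Polynomial.induction_on' with
  | add p q hp hq => simp [hp, hq]; ring
  | monomial n a =>
    simp [phiA, derivative_monomial, Derivation.leibniz, Derivation.leibniz_pow, derA_base]
    simp [derA]
    ring

/-- The embedding of polynomials into the function field. -/
noncomputable def phi : BZ[X] →+* FZ := (algebraMap AZ FZ).comp phiA

/-- The second coordinate of the generic point. -/
noncomputable def yF : FZ := algebraMap AZ FZ (MvPolynomial.X 2)

lemma phi_injective : Function.Injective (phi FZ) :=
  (IsFractionRing.injective AZ FZ).comp phiA_injective

lemma derF_phi (q : BZ[X]) : derF FZ (phi FZ q) = 2 * yF FZ * phi FZ (derivative q) := by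
  simp only [phi, RingHom.comp_apply, derF_alg, derA_phi, yF, map_mul, map_ofNat]

lemma yF_sq : yF FZ ^ 2 = phi FZ (X ^ 3 + C (MvPolynomial.X 0) * X + C (MvPolynomial.X 1)) := by
  simp only [phi, yF, RingHom.comp_apply, ← map_pow]
  congr 1
  simp [phiA, baseA, tA]

lemma two_yF_ne : 2 * yF FZ ≠ 0 := by
  have : (2 : FZ) * yF FZ = algebraMap AZ FZ (2 * MvPolynomial.X 2) := by
    rw [yF, map_mul, map_ofNat]
  rw [this]
  intro h
  have := IsFractionRing.injective AZ FZ (h.trans (map_zero _).symm)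
  simp at this

end Generic

section Identities

variable (F : Type) [Field F] [DecidableEq F] [Algebra AZ F] [IsFractionRing AZ F]

lemma Psi2_eq (R : Type*) [CommRing R] : (Wst R).Ψ₂Sq = 4 * X ^ 3 + 4 * C (MvPolynomial.X 0) * X + 4 * C (MvPolynomial.X 1) := by
  simp only [Ψ₂Sq, Wst, b₂, b₄, b₆, map_add, map_mul, map_pow, map_ofNat, map_zero]
  ring

lemma Psi3_eq (R : Type*) [CommRing R] : (Wst R).Ψ₃ = 3 * X ^ 4 + 6 * C (MvPolynomial.X 0) * X ^ 2
    + 12 * C (MvPolynomial.X 1) * X - C (MvPolynomial.X 0) ^ 2 := by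
  simp only [Ψ₃, Wst, b₂, b₄, b₆, b₈, map_add, map_mul, map_sub, map_pow, map_ofNat, map_zero]
  ring

lemma prePsi4_eq (R : Type*) [CommRing R] : (Wst R).preΨ₄ = 2 * X ^ 6 + 10 * C (MvPolynomial.X 0) * X ^ 4
    + 40 * C (MvPolynomial.X 1) * X ^ 3 - 10 * C (MvPolynomial.X 0) ^ 2 * X ^ 2
    - 8 * C (MvPolynomial.X 0) * C (MvPolynomial.X 1) * X
    - 16 * C (MvPolynomial.X 1) ^ 2 - 2 * C (MvPolynomial.X 0) ^ 3 := by
  simp only [preΨ₄, Wst, b₂, b₄, b₆, b₈, map_add, map_mul, map_sub, map_pow, map_ofNat, map_zero]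
  ring

/-- The generic division values. -/
noncomputable def psi (n : ℕ) : F := phi F ((Wst ℤ).preΨ' n) * if Even n then 2 * yF F else 1

lemma yF_sq' : (2 * yF F) ^ 2 = phi F (Wst ℤ).Ψ₂Sq := by
  rw [mul_pow, yF_sq]
  simp only [Psi2_eq, map_add, map_mul, map_pow, map_ofNat]
  ring

lemma psi_eq (n : ℕ) : psi F n =
    normEDS (2 * yF F) (phi F (Wst ℤ).Ψ₃) (phi F (Wst ℤ).preΨ₄) (n : ℤ) := by
  rw [normEDS_ofNat, psi, preΨ', map_preNormEDS', map_pow, ← yF_sq', ← pow_mul]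

lemma psi_sq (n : ℕ) : psi F n ^ 2 = phi F ((Wst ℤ).ΨSq n) := by
  rw [psi, ΨSq_ofNat, mul_pow, map_mul, map_pow]
  split_ifs <;> simp [yF_sq']

lemma psi_prod (n : ℕ) : phi F ((Wst ℤ).Φ (n + 1)) =
    phi F X * psi F (n + 1) ^ 2 - psi F (n + 2) * psi F n := by
  rw [Φ_ofNat, psi, psi, psi]
  have h2 : Even (n + 2) ↔ Even n := by simp [Nat.even_add]
  have h1 : Even (n + 1) ↔ ¬ Even n := Nat.even_add_one
  simp only [h1, h2]
  by_cases h : Even n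
  · simp [h, ← yF_sq']; ring
  · simp [h, ← yF_sq']; ring

/-- The generic curve point. -/
lemma exists_gen : ∃ P : (sw (phi F (C (MvPolynomial.X 0))) (phi F (C (MvPolynomial.X 1)))).toAffine.Point,
    Gen P (phi F X) (yF F) (psi F) := by
  have hy := two_yF_ne F
  have hns : (sw (phi F (C (MvPolynomial.X 0))) (phi F (C (MvPolynomial.X 1)))).toAffine.Nonsingular
      (phi F X) (yF F) := by
    rw [Affine.nonsingular_iff, Affine.equation_iff]
    refine ⟨?_, Or.inr ?_⟩
    · simp [sw, yF_sq]
    · simp only [sw]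
      intro h
      apply hy
      linear_combination h
  refine ⟨Affine.Point.some _ _ hns, ⟨⟨hns, rfl⟩, ?_, ?_, ?_, ?_, ?_, ?_, ?_, ?_⟩⟩
  · simp [psi]
  · simp [psi]
  · simp [psi]
  · have : ¬ Even 3 := by decide
    simp only [psi, this, preΨ'_three, Psi3_eq, map_add, map_sub, map_mul, map_pow, map_ofNat]
    simp
  · have : Even 4 := by decide
    simp only [psi, this, preΨ'_four, prePsi4_eq, map_add, map_sub, map_mul, map_pow, map_ofNat]
    simp
  · intro m
    simp only [psi_eq]
    have := normEDS_odd (2 * yF F) (phi F (Wst ℤ).Ψ₃) (phi F (Wst ℤ).preΨ₄) (m + 1)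
    rw [show (m : ℤ) + 1 + 2 = m + 3 by ring, show (m : ℤ) + 1 + 1 = m + 2 by ring,
      show (m : ℤ) + 1 - 1 = m by ring] at this
    push_cast
    exact this
  · intro m
    simp only [psi_eq]
    have := normEDS_even (2 * yF F) (phi F (Wst ℤ).Ψ₃) (phi F (Wst ℤ).preΨ₄) (m + 2)
    push_cast
    rw [normEDS_two]
    rw [show (m : ℤ) + 2 + 2 = m + 4 by ring, show (m : ℤ) + 2 + 1 = m + 3 by ring,
      show (m : ℤ) + 2 - 1 = m + 1 by ring, show (m : ℤ) + 2 - 2 = m by ring] at this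
    exact this
  · intro m
    rw [psi]
    refine mul_ne_zero ?_ ?_
    · rw [map_ne_zero_iff _ (phi_injective F)]
      apply preΨ'_ne_zero
      exact_mod_cast Nat.succ_ne_zero m
    · split_ifs
      · exact hy
      · exact one_ne_zero


lemma At.inj {F : Type*} [Field F] [DecidableEq F] {s t : F} {Q R : (sw s t).toAffine.Point}
    {a b : F} (h : At Q a b) (h' : At R a b) : Q = R := by
  obtain ⟨h, rfl⟩ := h
  obtain ⟨h', rfl⟩ := h'
  rfl

lemma At.ne_zero {F : Type*} [Field F] [DecidableEq F] {s t : F} {Q : (sw s t).toAffine.Point}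
    {a b : F} (h : At Q a b) : Q ≠ 0 := by
  obtain ⟨h, rfl⟩ := h
  exact Point.some_ne_zero h

lemma At.X_ne {F : Type*} [Field F] [DecidableEq F] {s t : F} {Q R : (sw s t).toAffine.Point}
    {a b c d : F} (h : At Q a b) (h' : At R c d) (h1 : Q + R ≠ 0) (h2 : Q - R ≠ 0) : a ≠ c := by
  rintro rfl
  have : (b - d) * (b + d) = 0 := by linear_combination h.eqn - h'.eqn
  rcases mul_eq_zero.mp this with e | e
  · obtain rfl := sub_eq_zero.mp e
    exact h2 (sub_eq_zero.mpr (h.inj h'))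
  · obtain rfl := eq_neg_of_add_eq_zero_left e
    exact h1 (by rw [h.inj h'.neg]; abel)

lemma key (k : ℕ) {P : (sw (phi F (C (MvPolynomial.X 0))) (phi F (C (MvPolynomial.X 1)))).toAffine.Point}
    (g : Gen P (phi F X) (yF F) (psi F)) :
    ∃ a b, At ((k + 1) • P) a b ∧
      phi F ((Wst ℤ).Φ ((k + 1 : ℕ) : ℤ)) = a * phi F ((Wst ℤ).ΨSq ((k + 1 : ℕ) : ℤ)) ∧
      2 * b * phi F ((Wst ℤ).ΨSq ((k + 1 : ℕ) : ℤ)) ^ 2 = psi F (2 * (k + 1)) ∧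
      phi F ((Wst ℤ).ΨSq ((k + 1 : ℕ) : ℤ)) ≠ 0 := by
  obtain ⟨a, b, h, e⟩ := g.X k
  refine ⟨a, b, h, ?_, ?_, ?_⟩
  · push_cast
    rw [psi_prod, ← e, show (k : ℤ) + 1 = ((k + 1 : ℕ) : ℤ) by push_cast; rfl, ← psi_sq]
    ring
  · rw [← psi_sq, ← pow_mul]
    exact g.Yall k h
  · rw [← psi_sq]
    exact pow_ne_zero _ (g.nz k)

lemma ident_I' (F : Type) [Field F] [DecidableEq F] [Algebra AZ F] [IsFractionRing AZ F] (k : ℕ) :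
    derivative ((Wst ℤ).Φ ((k + 1 : ℕ) : ℤ)) * (Wst ℤ).ΨSq ((k + 1 : ℕ) : ℤ) -
      (Wst ℤ).Φ ((k + 1 : ℕ) : ℤ) * derivative ((Wst ℤ).ΨSq ((k + 1 : ℕ) : ℤ)) =
      ((k + 1 : ℕ) : BZ[X]) * (Wst ℤ).preΨ' (2 * (k + 1)) := by
  obtain ⟨P, g⟩ := exists_gen F
  obtain ⟨a, b, h, e1, e2, e3⟩ := key F k g
  apply phi_injective F
  apply mul_left_cancel₀ (two_yF_ne F)
  have hD := g.deriv (derF F) (by rw [derF_phi]; simp) (by rw [derF_phi]; simp)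
    (by rw [derF_phi]; simp) k h
  have d1 := congrArg (derF F) e1
  rw [Derivation.leibniz, derF_phi, derF_phi, hD, smul_eq_mul, smul_eq_mul] at d1
  have hpsi : psi F (2 * (k + 1)) = phi F ((Wst ℤ).preΨ' (2 * (k + 1))) * (2 * yF F) := by
    simp [psi]
  rw [hpsi] at e2
  simp only [map_sub, map_mul, map_natCast]
  push_cast at *
  linear_combination phi F ((Wst ℤ).ΨSq (k + 1)) * d1 + ((k : F) + 1) * e2 -
    2 * yF F * phi F (derivative ((Wst ℤ).ΨSq (k + 1))) * e1

lemma ident_D' (F : Type) [Field F] [DecidableEq F] [Algebra AZ F] [IsFractionRing AZ F] (k : ℕ) :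
    (Wst ℤ).Φ ((2 * (k + 1) : ℕ) : ℤ) =
      ((Wst ℤ).Φ ((k + 1 : ℕ) : ℤ) ^ 2 - C (MvPolynomial.X 0) * (Wst ℤ).ΨSq ((k + 1 : ℕ) : ℤ) ^ 2) ^ 2
      - 8 * C (MvPolynomial.X 1) * (Wst ℤ).Φ ((k + 1 : ℕ) : ℤ) * (Wst ℤ).ΨSq ((k + 1 : ℕ) : ℤ) ^ 3 ∧
    (Wst ℤ).ΨSq ((2 * (k + 1) : ℕ) : ℤ) =
      4 * (Wst ℤ).ΨSq ((k + 1 : ℕ) : ℤ) * ((Wst ℤ).Φ ((k + 1 : ℕ) : ℤ) ^ 3 +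
        C (MvPolynomial.X 0) * (Wst ℤ).Φ ((k + 1 : ℕ) : ℤ) * (Wst ℤ).ΨSq ((k + 1 : ℕ) : ℤ) ^ 2 +
        C (MvPolynomial.X 1) * (Wst ℤ).ΨSq ((k + 1 : ℕ) : ℤ) ^ 3) := by
  obtain ⟨P, g⟩ := exists_gen F
  obtain ⟨a, b, h, e1, e2, e3⟩ := key F k g
  obtain ⟨a', b', h', e1', e2', e3'⟩ := key F (2 * k + 1) g
  rw [show 2 * k + 1 + 1 = 2 * (k + 1) by ring] at h' e1' e2' e3'
  have hb : 2 * b ≠ 0 := by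
    intro hb
    rw [hb, zero_mul] at e2
    exact g.nz (2 * k + 1) e2.symm
  have hd := h.dup hb (x₁ := a') (y₁ := b') (by rwa [← add_nsmul, ← two_mul])
  have hE := h.eqn
  have e4 := congrArg (· ^ 2) e2
  simp only [psi_sq] at e4
  generalize hΦ : (Wst ℤ).Φ ((k + 1 : ℕ) : ℤ) = f at *
  generalize hΨ : (Wst ℤ).ΨSq ((k + 1 : ℕ) : ℤ) = q at *
  generalize hΦ' : (Wst ℤ).Φ ((2 * (k + 1) : ℕ) : ℤ) = f' at *
  generalize hΨ' : (Wst ℤ).ΨSq ((2 * (k + 1) : ℕ) : ℤ) = q' at *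
  constructor
  · apply phi_injective F
    simp only [map_sub, map_mul, map_pow, map_ofNat]
    rw [e1', ← e4, e1]
    linear_combination phi F q ^ 4 * hd
  · apply phi_injective F
    simp only [map_add, map_mul, map_pow, map_ofNat]
    rw [← e4, e1]
    linear_combination 4 * phi F q ^ 4 * hE

lemma ident_A' (F : Type) [Field F] [DecidableEq F] [Algebra AZ F] [IsFractionRing AZ F] (k : ℕ) :
    (Wst ℤ).ΨSq ((2 * (k + 1) + 1 : ℕ) : ℤ) =
      ((Wst ℤ).Φ ((k + 1 : ℕ) : ℤ) * (Wst ℤ).ΨSq ((k + 2 : ℕ) : ℤ) -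
        (Wst ℤ).Φ ((k + 2 : ℕ) : ℤ) * (Wst ℤ).ΨSq ((k + 1 : ℕ) : ℤ)) ^ 2 ∧
    (Wst ℤ).Φ ((2 * (k + 1) + 1 : ℕ) : ℤ) + X * (Wst ℤ).ΨSq ((2 * (k + 1) + 1 : ℕ) : ℤ) =
      2 * ((Wst ℤ).Φ ((k + 1 : ℕ) : ℤ) * (Wst ℤ).Φ ((k + 2 : ℕ) : ℤ) +
        C (MvPolynomial.X 0) * (Wst ℤ).ΨSq ((k + 1 : ℕ) : ℤ) * (Wst ℤ).ΨSq ((k + 2 : ℕ) : ℤ)) *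
      ((Wst ℤ).Φ ((k + 1 : ℕ) : ℤ) * (Wst ℤ).ΨSq ((k + 2 : ℕ) : ℤ) +
        (Wst ℤ).Φ ((k + 2 : ℕ) : ℤ) * (Wst ℤ).ΨSq ((k + 1 : ℕ) : ℤ)) +
      4 * C (MvPolynomial.X 1) * (Wst ℤ).ΨSq ((k + 1 : ℕ) : ℤ) ^ 2 *
        (Wst ℤ).ΨSq ((k + 2 : ℕ) : ℤ) ^ 2 ∧
    X * (Wst ℤ).Φ ((2 * (k + 1) + 1 : ℕ) : ℤ) =
      ((Wst ℤ).Φ ((k + 1 : ℕ) : ℤ) * (Wst ℤ).Φ ((k + 2 : ℕ) : ℤ) -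
        C (MvPolynomial.X 0) * (Wst ℤ).ΨSq ((k + 1 : ℕ) : ℤ) * (Wst ℤ).ΨSq ((k + 2 : ℕ) : ℤ)) ^ 2 -
      4 * C (MvPolynomial.X 1) * (Wst ℤ).ΨSq ((k + 1 : ℕ) : ℤ) * (Wst ℤ).ΨSq ((k + 2 : ℕ) : ℤ) *
      ((Wst ℤ).Φ ((k + 1 : ℕ) : ℤ) * (Wst ℤ).ΨSq ((k + 2 : ℕ) : ℤ) +
        (Wst ℤ).Φ ((k + 2 : ℕ) : ℤ) * (Wst ℤ).ΨSq ((k + 1 : ℕ) : ℤ)) := by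
  obtain ⟨P, g⟩ := exists_gen F
  obtain ⟨c, d, h, e1, e2, e3⟩ := key F k g
  obtain ⟨a, b, h', e1', e2', e3'⟩ := key F (k + 1) g
  obtain ⟨x', y', h'', e1'', e2'', e3''⟩ := key F (2 * k + 2) g
  obtain ⟨x'', y'', h3, f⟩ := g.X (2 * k + 2)
  obtain ⟨rfl, rfl⟩ := h3.unique h''
  rw [psi_sq] at f
  have hsum : (k + 1 + 1) • P + (k + 1) • P = (2 * k + 2 + 1) • P := by
    rw [← add_nsmul]; congr 1; ring
  have hdif : (k + 1 + 1) • P - (k + 1) • P = P := by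
    rw [succ_nsmul]; abel
  have hne : a ≠ c := h'.X_ne h (by rw [hsum]; exact h''.ne_zero)
    (by rw [hdif]; exact g.at'.ne_zero)
  obtain ⟨d1, d2, d3⟩ := h'.diff h hne (hsum ▸ h'') (by rw [hdif]; exact g.at')
  have z1 : psi F (2 * (k + 1 + 1)) ≠ 0 := g.nz (2 * k + 3)
  have z2 : psi F (2 * (k + 1)) ≠ 0 := g.nz (2 * k + 1)
  rw [show 2 * k + 2 + 2 = 2 * (k + 1 + 1) by ring, show 2 * k + 2 = 2 * (k + 1) by ring] at f
  rw [show 2 * k + 2 = 2 * (k + 1) by ring] at e1'' e3''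
  rw [show k + 1 + 1 = k + 2 by ring] at *
  generalize hΦ : (Wst ℤ).Φ ((k + 1 : ℕ) : ℤ) = f1 at *
  generalize hΨ : (Wst ℤ).ΨSq ((k + 1 : ℕ) : ℤ) = q1 at *
  generalize hΦ' : (Wst ℤ).Φ ((k + 2 : ℕ) : ℤ) = f2 at *
  generalize hΨ' : (Wst ℤ).ΨSq ((k + 2 : ℕ) : ℤ) = q2 at *
  generalize hΦ'' : (Wst ℤ).Φ ((2 * (k + 1) + 1 : ℕ) : ℤ) = f3 at *
  generalize hΨ'' : (Wst ℤ).ΨSq ((2 * (k + 1) + 1 : ℕ) : ℤ) = q3 at *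
  have A1 : phi F q3 = (a - c) ^ 2 * phi F q1 ^ 2 * phi F q2 ^ 2 := by
    apply mul_left_cancel₀ z1
    apply mul_left_cancel₀ z2
    rw [← e2, ← e2'] at f ⊢
    have hx : phi F X - x'' ≠ 0 := by
      intro hx
      rw [hx, zero_mul, eq_comm, e2, e2'] at f
      exact mul_ne_zero z1 z2 f
    apply mul_left_cancel₀ hx
    linear_combination (4 * b * d * phi F q1 ^ 2 * phi F q2 ^ 2) * (f - phi F q1 ^ 2 * phi F q2 ^ 2 * d1)
  refine ⟨?_, ?_, ?_⟩
  · apply phi_injective F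
    simp only [map_sub, map_mul, map_pow]
    rw [A1, e1, e1']
    ring
  · apply phi_injective F
    simp only [map_add, map_mul, map_pow, map_ofNat]
    rw [e1'', A1, e1, e1']
    linear_combination phi F q1 ^ 2 * phi F q2 ^ 2 * d2
  · apply phi_injective F
    simp only [map_add, map_sub, map_mul, map_pow, map_ofNat]
    rw [e1'', A1, e1, e1']
    linear_combination phi F q1 ^ 2 * phi F q2 ^ 2 * d3

end Identities

section Coprime

lemma addsub_zero {k : Type*} [Field k] {s t A B U : k} (hΔ : 16 * (4 * s ^ 3 + 27 * t ^ 2) ≠ 0)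
    (m0 : A ^ 2 - 2 * s * A * U - 4 * t * B * U + s ^ 2 * U ^ 2 = 0)
    (m1 : 2 * B * A + 2 * s * B * U + 4 * t * U ^ 2 = 0)
    (m2 : B ^ 2 - 4 * A * U = 0) : A = 0 ∧ B = 0 ∧ U = 0 := by
  have : (sw s t).IsElliptic := by
    rw [isElliptic_iff]
    apply Ne.isUnit
    contrapose! hΔ
    simp only [Δ, sw, b₂, b₄, b₆, b₈] at hΔ
    linear_combination -hΔ
  have h := addSubMap_ne_zero (sw s t) (x := ![A, B, U])
  by_contra hne
  refine h ?_ ?_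
  · intro e
    have e0 := congrFun e 0
    have e1 := congrFun e 1
    have e2 := congrFun e 2
    simp at e0 e1 e2
    exact hne ⟨e0, e1, e2⟩
  · funext i
    fin_cases i
    · simp [addSubMap, sw, b₂, b₄, b₆, b₈]
      linear_combination m0
    · simp [addSubMap, sw, b₂, b₄, b₆, b₈]
      linear_combination m1
    · simp [addSubMap]
      linear_combination m2

lemma no_common_root {k : Type*} [Field k] (θ : BZ →+* k)
    (hΔ : 16 * (4 * θ (MvPolynomial.X 0) ^ 3 + 27 * θ (MvPolynomial.X 1) ^ 2) ≠ 0) (α : k) (n : ℕ) :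
    1 ≤ n → ¬ (eval₂ θ α ((Wst ℤ).Φ (n : ℤ)) = 0 ∧ eval₂ θ α ((Wst ℤ).ΨSq (n : ℤ)) = 0) := by
  classical
  induction n using Nat.strong_induction_on with
  | _ n ih =>
  intro hn
  obtain ⟨m, rfl | rfl⟩ := Nat.even_or_odd' n
  · obtain ⟨k, rfl⟩ : ∃ k, m = k + 1 := ⟨m - 1, by omega⟩
    have ih1 := ih (k + 1) (by omega) (by omega)
    obtain ⟨D1, D2⟩ := ident_D' (FractionRing AZ) k
    rw [D1, D2]
    simp only [eval₂_sub, eval₂_mul, eval₂_add, eval₂_pow, eval₂_C, eval₂_ofNat]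
    generalize eval₂ θ α ((Wst ℤ).Φ ((k + 1 : ℕ) : ℤ)) = u at *
    generalize eval₂ θ α ((Wst ℤ).ΨSq ((k + 1 : ℕ) : ℤ)) = v at *
    rintro ⟨f1, f2⟩
    obtain ⟨g1, -, g3⟩ := addsub_zero (A := u ^ 2) (B := 2 * u * v) (U := v ^ 2) hΔ
      (by linear_combination f1) (by linear_combination f2) (by ring)
    exact ih1 ⟨pow_eq_zero_iff (two_ne_zero) |>.mp g1, pow_eq_zero_iff (two_ne_zero) |>.mp g3⟩
  · rcases Nat.eq_zero_or_pos m with rfl | hm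
    · simp
    obtain ⟨k, rfl⟩ : ∃ k, m = k + 1 := ⟨m - 1, by omega⟩
    have ih1 := ih (k + 1) (by omega) (by omega)
    have ih2 := ih (k + 2) (by omega) (by omega)
    obtain ⟨A1, A2, A3⟩ := ident_A' (FractionRing AZ) k
    replace A1 := congrArg (eval₂ θ α) A1
    replace A2 := congrArg (eval₂ θ α) A2
    replace A3 := congrArg (eval₂ θ α) A3
    simp only [eval₂_sub, eval₂_mul, eval₂_add, eval₂_pow, eval₂_C, eval₂_ofNat, eval₂_X] at A1 A2 A3
    rintro ⟨f1, f2⟩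
    rw [f2] at A1
    rw [f1, f2] at A2
    rw [f1] at A3
    generalize eval₂ θ α ((Wst ℤ).Φ ((k + 1 : ℕ) : ℤ)) = u at *
    generalize eval₂ θ α ((Wst ℤ).ΨSq ((k + 1 : ℕ) : ℤ)) = v at *
    generalize eval₂ θ α ((Wst ℤ).Φ ((k + 2 : ℕ) : ℤ)) = u' at *
    generalize eval₂ θ α ((Wst ℤ).ΨSq ((k + 2 : ℕ) : ℤ)) = v' at *
    obtain ⟨g1, g2, g3⟩ := addsub_zero (A := u * u') (B := u * v' + u' * v) (U := v * v') hΔ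
      (by linear_combination -A3) (by linear_combination -A2) (by linear_combination -A1)
    rcases mul_eq_zero.mp g1 with rfl | rfl
    · rcases mul_eq_zero.mp g3 with rfl | rfl
      · exact ih1 ⟨rfl, rfl⟩
      · have : u' * v = 0 := by linear_combination g2
        rcases mul_eq_zero.mp this with rfl | rfl
        · exact ih2 ⟨rfl, rfl⟩
        · exact ih1 ⟨rfl, rfl⟩
    · rcases mul_eq_zero.mp g3 with rfl | rfl
      · have : u * v' = 0 := by linear_combination g2
        rcases mul_eq_zero.mp this with rfl | rfl
        · exact ih1 ⟨rfl, rfl⟩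
        · exact ih2 ⟨rfl, rfl⟩
      · exact ih2 ⟨rfl, rfl⟩

lemma coprime_map {L : Type*} [Field L] (θ : BZ →+* L)
    (hΔ : 16 * (4 * θ (MvPolynomial.X 0) ^ 3 + 27 * θ (MvPolynomial.X 1) ^ 2) ≠ 0) (n : ℕ)
    (hn : 1 ≤ n) : IsCoprime (((Wst ℤ).Φ (n : ℤ)).map θ) (((Wst ℤ).ΨSq (n : ℤ)).map θ) := by
  rw [Polynomial.isCoprime_iff_aeval_ne_zero_of_isAlgClosed (k := L) (AlgebraicClosure L)]
  intro α
  have := no_common_root ((algebraMap L (AlgebraicClosure L)).comp θ) (by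
    intro h
    apply hΔ
    apply (algebraMap L (AlgebraicClosure L)).injective
    simpa only [RingHom.comp_apply, map_mul, map_add, map_pow, map_ofNat, map_zero] using h) α n hn
  rw [not_and_or] at this
  simpa [aeval_def, eval₂_map] using this

lemma deriv_zero {L : Type*} [Field L] (θ : BZ →+* L)
    (hΔ : 16 * (4 * θ (MvPolynomial.X 0) ^ 3 + 27 * θ (MvPolynomial.X 1) ^ 2) ≠ 0) (n : ℕ)
    (hn : 1 ≤ n) (hn0 : (n : L) = 0) :
    derivative (((Wst ℤ).Φ (n : ℤ)).map θ) = 0 ∧ derivative (((Wst ℤ).ΨSq (n : ℤ)).map θ) = 0 := by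
  classical
  have hc := coprime_map θ hΔ n hn
  obtain ⟨k, rfl⟩ : ∃ k, n = k + 1 := ⟨n - 1, by omega⟩
  have hI := congrArg (Polynomial.map θ) (ident_I' (FractionRing AZ) k)
  have hz : ((k + 1 : ℕ) : L[X]) = 0 := by
    rw [← map_natCast C, hn0, map_zero]
  rw [Polynomial.map_sub, Polynomial.map_mul, Polynomial.map_mul, Polynomial.map_mul,
    Polynomial.map_natCast, hz, zero_mul, ← derivative_map, ← derivative_map, sub_eq_zero] at hI
  have hdeg : (((Wst ℤ).Φ ((k + 1 : ℕ) : ℤ)).map θ).leadingCoeff = 1 ∧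
      (((Wst ℤ).Φ ((k + 1 : ℕ) : ℤ)).map θ).natDegree ≠ 0 := by
    rw [← map_Φ]
    exact ⟨leadingCoeff_Φ _ _, (natDegree_Φ_pos _ (by omega)).ne'⟩
  generalize ((Wst ℤ).Φ ((k + 1 : ℕ) : ℤ)).map θ = f at *
  generalize ((Wst ℤ).ΨSq ((k + 1 : ℕ) : ℤ)).map θ = q at *
  have hf0 : f ≠ 0 := by
    rintro rfl
    simp at hdeg
  have hf : derivative f = 0 := by
    have hdvd : f ∣ derivative f := by
      apply hc.dvd_of_dvd_mul_right
      rw [hI]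
      exact dvd_mul_right _ _
    by_contra hne
    have := natDegree_le_of_dvd hdvd hne
    have := natDegree_derivative_lt hdeg.2
    omega
  refine ⟨hf, ?_⟩
  rw [hf, zero_mul] at hI
  exact (mul_eq_zero.mp hI.symm).resolve_left hf0

lemma Wst_map (p : ℕ) : (Wst ℤ).map (MvPolynomial.map (Int.castRingHom (ZMod p))) = Wst (ZMod p) := by
  simp [Wst, WeierstrassCurve.map]

lemma deriv_zero_p (p : ℕ) [Fact p.Prime] (hodd : Odd p) :
    derivative ((Wst (ZMod p)).Φ (p : ℤ)) = 0 ∧ derivative ((Wst (ZMod p)).ΨSq (p : ℤ)) = 0 := by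
  have hinj : Function.Injective (algebraMap (MvPolynomial (Fin 2) (ZMod p)) (FractionRing (MvPolynomial (Fin 2) (ZMod p)))) := IsFractionRing.injective _ _
  have h2 : (2 : ZMod p) ≠ 0 := by
    intro h
    have : ((2 : ℕ) : ZMod p) = 0 := by exact_mod_cast h
    rw [ZMod.natCast_eq_zero_iff] at this
    have hp := (Fact.out : p.Prime).two_le
    have := Nat.le_of_dvd (by norm_num) this
    obtain rfl : p = 2 := by omega
    exact absurd hodd (by decide)
  have h := deriv_zero ((algebraMap (MvPolynomial (Fin 2) (ZMod p)) (FractionRing (MvPolynomial (Fin 2) (ZMod p)))).comp (MvPolynomial.map (Int.castRingHom (ZMod p)))) (by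
    intro h
    have h' : algebraMap (MvPolynomial (Fin 2) (ZMod p)) (FractionRing (MvPolynomial (Fin 2) (ZMod p))) (16 * (4 * MvPolynomial.X 0 ^ 3 + 27 * MvPolynomial.X 1 ^ 2)) =
        algebraMap (MvPolynomial (Fin 2) (ZMod p)) (FractionRing (MvPolynomial (Fin 2) (ZMod p))) 0 := by
      simpa only [RingHom.comp_apply, MvPolynomial.map_X, map_mul, map_add, map_pow, map_ofNat, map_zero] using h
    have h'' := congrArg (MvPolynomial.eval (![1, 0] : Fin 2 → ZMod p)) (hinj h')
    simp at h''
    rcases h'' with h'' | h''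
    · have : (2 : ZMod p) ^ 4 = 0 := by linear_combination h''
      exact h2 (pow_eq_zero_iff (by norm_num) |>.mp this)
    · have : (2 : ZMod p) ^ 2 = 0 := by linear_combination h''
      exact h2 (pow_eq_zero_iff (by norm_num) |>.mp this)) p (Fact.out : p.Prime).one_le (by
      have := CharP.cast_eq_zero (MvPolynomial (Fin 2) (ZMod p)) p
      rw [← map_natCast (algebraMap (MvPolynomial (Fin 2) (ZMod p)) (FractionRing (MvPolynomial (Fin 2) (ZMod p)))), this, map_zero])
  rw [← Polynomial.map_map, ← Polynomial.map_map, ← map_Φ, ← map_ΨSq, Wst_map, derivative_map,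
    derivative_map] at h
  exact ⟨Polynomial.map_injective _ hinj (by simpa using h.1),
    Polynomial.map_injective _ hinj (by simpa using h.2)⟩

end Coprime

section Homog

set_option linter.unusedSimpArgs false

variable {R : Type*} [CommRing R]

/-- Weighted homogeneity of polynomials in `x`, with all weights doubled. -/
def HH (d : ℤ) (f : (MvPolynomial (Fin 2) R)[X]) : Prop :=
  ∀ (k : ℕ) (e : Fin 2 →₀ ℕ), (f.coeff k).coeff e ≠ 0 →
    2 * ((Finsupp.weight (![2, 3] : Fin 2 → ℕ) e : ℕ) + k : ℤ) = d

variable {d d' : ℤ} {f g : (MvPolynomial (Fin 2) R)[X]}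

lemma HH.cast (h : HH d f) (e : d = d') : HH d' f := e ▸ h

lemma HH.zero : HH d (0 : (MvPolynomial (Fin 2) R)[X]) := by
  intro k e h
  simp at h

lemma HH.add (hf : HH d f) (hg : HH d g) : HH d (f + g) := by
  intro k e h
  rw [coeff_add, MvPolynomial.coeff_add] at h
  by_cases h1 : (f.coeff k).coeff e = 0
  · exact hg k e (by rwa [h1, zero_add] at h)
  · exact hf k e h1

lemma HH.neg (hf : HH d f) : HH d (-f) := by
  intro k e h
  rw [coeff_neg, MvPolynomial.coeff_neg] at h
  exact hf k e (neg_ne_zero.mp h)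

lemma HH.sub (hf : HH d f) (hg : HH d g) : HH d (f - g) := by
  rw [sub_eq_add_neg]
  exact hf.add hg.neg

lemma HH.mul (hf : HH d f) (hg : HH d' g) : HH (d + d') (f * g) := by
  intro k e h
  rw [coeff_mul, MvPolynomial.coeff_sum] at h
  obtain ⟨⟨i, j⟩, hij, h⟩ := Finset.exists_ne_zero_of_sum_ne_zero h
  rw [MvPolynomial.coeff_mul] at h
  obtain ⟨⟨e1, e2⟩, he, h⟩ := Finset.exists_ne_zero_of_sum_ne_zero h
  have h1 := hf i e1 (left_ne_zero_of_mul h)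
  have h2 := hg j e2 (right_ne_zero_of_mul h)
  rw [Finset.HasAntidiagonal.mem_antidiagonal] at hij he
  simp only at hij he
  subst hij he
  rw [map_add, ← h1, ← h2]
  push_cast
  ring

lemma HH.C_mon {c : MvPolynomial (Fin 2) R} {n : ℕ}
    (hc : c.IsWeightedHomogeneous (![2, 3] : Fin 2 → ℕ) n) : HH (2 * n) (C c) := by
  intro k e h
  rw [coeff_C] at h
  split_ifs at h with hk
  · rw [hc h, hk]; simp
  · simp at h

lemma HH.one : HH 0 (1 : (MvPolynomial (Fin 2) R)[X]) := by
  have := HH.C_mon (MvPolynomial.isWeightedHomogeneous_one R (![2, 3] : Fin 2 → ℕ))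
  simpa using this

lemma HH.nat (n : ℕ) : HH 0 (n : (MvPolynomial (Fin 2) R)[X]) := by
  induction n with
  | zero => rw [Nat.cast_zero]; exact HH.zero
  | succ n ih => rw [Nat.cast_succ]; exact ih.add HH.one

lemma HH.ofNat (n : ℕ) [n.AtLeastTwo] : HH 0 (OfNat.ofNat n : (MvPolynomial (Fin 2) R)[X]) :=
  HH.nat n

lemma HH.pow (hf : HH d f) (n : ℕ) : HH (n * d) (f ^ n) := by
  induction n with
  | zero => simpa using HH.one
  | succ n ih => rw [pow_succ]; exact (ih.mul hf).cast (by push_cast; ring)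

lemma HH.X : HH 2 (X : (MvPolynomial (Fin 2) R)[X]) := by
  intro k e h
  rw [coeff_X] at h
  split_ifs at h with hk
  · rw [MvPolynomial.coeff_one] at h
    have : 0 = e := by by_contra he; simp [he] at h
    rw [← this, ← hk]; simp
  · simp at h

lemma HH.s : HH 4 (C (MvPolynomial.X 0) : (MvPolynomial (Fin 2) R)[X]) := by
  have := HH.C_mon (MvPolynomial.isWeightedHomogeneous_X R (![2, 3] : Fin 2 → ℕ) 0)
  simpa using this

lemma HH.t : HH 6 (C (MvPolynomial.X 1) : (MvPolynomial (Fin 2) R)[X]) := by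
  have := HH.C_mon (MvPolynomial.isWeightedHomogeneous_X R (![2, 3] : Fin 2 → ℕ) 1)
  simpa using this

lemma HH_Psi2 : HH 6 (Wst R).Ψ₂Sq := by
  rw [Psi2_eq]
  refine .add (.add ?_ ?_) ?_
  · exact ((HH.ofNat 4).mul (HH.X.pow 3)).cast (by norm_num)
  · exact (((HH.ofNat 4).mul HH.s).mul HH.X).cast (by norm_num)
  · exact ((HH.ofNat 4).mul HH.t).cast (by norm_num)

lemma HH_Psi3 : HH 8 (Wst R).Ψ₃ := by
  rw [Psi3_eq]
  refine .sub (.add (.add ?_ ?_) ?_) ?_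
  · exact ((HH.ofNat 3).mul (HH.X.pow 4)).cast (by norm_num)
  · exact (((HH.ofNat 6).mul HH.s).mul (HH.X.pow 2)).cast (by norm_num)
  · exact (((HH.ofNat 12).mul HH.t).mul HH.X).cast (by norm_num)
  · exact (HH.s.pow 2).cast (by norm_num)

lemma HH_prePsi4 : HH 12 (Wst R).preΨ₄ := by
  rw [prePsi4_eq]
  refine .sub (.sub (.sub (.sub (.add (.add ?_ ?_) ?_) ?_) ?_) ?_) ?_
  · exact ((HH.ofNat 2).mul (HH.X.pow 6)).cast (by norm_num)
  · exact (((HH.ofNat 10).mul HH.s).mul (HH.X.pow 4)).cast (by norm_num)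
  · exact (((HH.ofNat 40).mul HH.t).mul (HH.X.pow 3)).cast (by norm_num)
  · exact (((HH.ofNat 10).mul (HH.s.pow 2)).mul (HH.X.pow 2)).cast (by norm_num)
  · exact ((((HH.ofNat 8).mul HH.s).mul HH.t).mul HH.X).cast (by norm_num)
  · exact ((HH.ofNat 16).mul (HH.t.pow 2)).cast (by norm_num)
  · exact ((HH.ofNat 2).mul (HH.s.pow 3)).cast (by norm_num)

/-- The doubled weight of the reduced division polynomial. -/
def dd (n : ℕ) : ℤ := n ^ 2 - if Even n then 4 else 1

lemma HH_pre (n : ℕ) : HH (dd n) ((Wst R).preΨ' n) := by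
  induction n using normEDSRec with
  | zero => rw [preΨ'_zero]; exact HH.zero
  | one => rw [preΨ'_one]; exact HH.one.cast (by simp [dd])
  | two => rw [preΨ'_two]; exact HH.one.cast (by simp [dd])
  | three => rw [preΨ'_three]; exact HH_Psi3.cast (by simp [dd, show ¬ Even 3 by decide])
  | four => rw [preΨ'_four]; exact HH_prePsi4.cast (by simp [dd, show Even 4 by decide])
  | even m h1 h2 h3 h4 h5 =>
    rw [preΨ'_even]
    refine .sub ?_ ?_
    · refine (((h2.pow 2).mul h3).mul h5).cast ?_
      simp only [dd]
      by_cases h : Even m <;> simp [h, parity_simps, show ¬ Even 3 by decide, show ¬ Even 5 by decide] <;> ring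
    · refine ((h1.mul h3).mul (h4.pow 2)).cast ?_
      simp only [dd]
      by_cases h : Even m <;> simp [h, parity_simps, show ¬ Even 3 by decide, show Even 4 by decide] <;> ring
  | odd m h1 h2 h3 h4 =>
    rw [preΨ'_odd]
    by_cases h : Even m
    · rw [if_pos h, if_pos h]
      refine .sub ?_ ?_
      · refine ((h4.mul (h2.pow 3)).mul (HH_Psi2.pow 2)).cast ?_
        simp only [dd]
        simp [h, parity_simps, show Even 4 by decide]; ring
      · refine ((h1.mul (h3.pow 3)).mul HH.one).cast ?_
        simp only [dd]
        simp [h, parity_simps, show ¬ Even 3 by decide]; ring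
    · rw [if_neg h, if_neg h]
      refine .sub ?_ ?_
      · refine ((h4.mul (h2.pow 3)).mul HH.one).cast ?_
        simp only [dd]
        simp [h, parity_simps, show Even 4 by decide]; ring
      · refine ((h1.mul (h3.pow 3)).mul (HH_Psi2.pow 2)).cast ?_
        simp only [dd]
        simp [h, parity_simps, show ¬ Even 3 by decide]; ring

lemma HH_PsiSq (n : ℕ) : HH (2 * ((n : ℤ) ^ 2 - 1)) ((Wst R).ΨSq n) := by
  rw [ΨSq_ofNat]
  by_cases h : Even n
  · rw [if_pos h]
    refine (((HH_pre n).pow 2).mul HH_Psi2).cast ?_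
    simp [dd, h]; ring
  · rw [if_neg h]
    refine (((HH_pre n).pow 2).mul HH.one).cast ?_
    simp [dd, h]

lemma HH_Phi (n : ℕ) : HH (2 * ((n : ℤ) + 1) ^ 2) ((Wst R).Φ ((n : ℤ) + 1)) := by
  rw [Φ_ofNat]
  by_cases h : Even n
  · simp only [h, Nat.even_add_one, not_true, if_true, if_false]
    refine .sub ?_ ?_
    · refine ((HH.X.mul ((HH_pre (n + 1)).pow 2)).mul HH.one).cast ?_
      simp [dd, h, parity_simps]; ring
    · refine (((HH_pre (n + 2)).mul (HH_pre n)).mul HH_Psi2).cast ?_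
      simp [dd, h, parity_simps]; ring
  · simp only [h, Nat.even_add_one, not_false_iff, if_true, if_false]
    refine .sub ?_ ?_
    · refine ((HH.X.mul ((HH_pre (n + 1)).pow 2)).mul HH_Psi2).cast ?_
      simp [dd, h, parity_simps]; ring
    · refine (((HH_pre (n + 2)).mul (HH_pre n)).mul HH.one).cast ?_
      simp [dd, h, parity_simps]; ring

lemma HH.coeff (hf : HH d f) (k n : ℕ) (h : 2 * ((n : ℤ) + k) = d) :
    (f.coeff k).IsWeightedHomogeneous (![2, 3] : Fin 2 → ℕ) n := by
  intro e he
  have := hf k e he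
  have : (Finsupp.weight (![2, 3] : Fin 2 → ℕ) e : ℤ) = n := by linarith
  exact_mod_cast this

end Homog


end EtaAux

/-- The mod-`p` reduction of `σ_{s,t,x̃}(x)` is a monic polynomial of degree `p²` in `x` which
is a polynomial in `x^p`: there is a monic `η_{s,t,x̃}(X)` of degree `p` with
`η_{s,t,x̃}(x^p) = σ_{s,t,x̃}(x) mod p`, whose coefficient of `X^(p-i)` has the form
`b_{pi} + x̃·c_{pi-1}` with `b_k, c_k ∈ F_p[s,t]` weight-homogeneous of weight `k`
(for `wt s = 2`, `wt t = 3`). -/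
theorem exists_eta (p : ℕ) [Fact p.Prime] (hodd : Odd p) (hp3 : 3 ≤ p)
    (K : Type*) [Field K] [CharP K p] :
    ∃ η : Polynomial (Polynomial (MvPolynomial (Fin 2) (ZMod p))),
      η.Monic ∧ η.natDegree = p ∧ η.comp (Polynomial.X ^ p) = sigmaP p ∧
      ∀ i, 1 ≤ i → i ≤ p →
        ∃ b c : MvPolynomial (Fin 2) (ZMod p),
          b.IsWeightedHomogeneous (![2, 3] : Fin 2 → ℕ) (p * i) ∧
          c.IsWeightedHomogeneous (![2, 3] : Fin 2 → ℕ) (p * i - 1) ∧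
          η.coeff (p - i) = Polynomial.C b + Polynomial.X * Polynomial.C c := by
  have hp : p ≠ 0 := by omega
  obtain ⟨hΦ, hΨ⟩ := EtaAux.deriv_zero_p p hodd
  have hder : derivative (sigmaP p) = 0 := by
    rw [sigmaP, derivative_sub, derivative_C_mul, derivative_map, derivative_map, hΦ, hΨ]
    simp
  have hexp := Polynomial.expand_contract p hder hp
  have hlt : (Polynomial.C (Polynomial.X) * ((Wst (ZMod p)).ΨSq (p : ℤ)).map
      (Polynomial.C)).degree < (((Wst (ZMod p)).Φ (p : ℤ)).map (Polynomial.C)).degree := by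
    have h1 : ((Wst (ZMod p)).Φ (p : ℤ)).degree = ((p ^ 2 : ℕ) : WithBot ℕ) := by
      rw [degree_eq_natDegree (Φ_ne_zero _ _), natDegree_Φ, Int.natAbs_natCast]
    have h2 := natDegree_ΨSq_le (Wst (ZMod p)) (p : ℤ)
    rw [Int.natAbs_natCast] at h2
    rw [degree_map_eq_of_injective Polynomial.C_injective, h1]
    rw [degree_C_mul Polynomial.X_ne_zero, degree_map_eq_of_injective Polynomial.C_injective]
    refine lt_of_le_of_lt degree_le_natDegree ?_
    have : 0 < p ^ 2 := by positivity
    exact_mod_cast (by omega : ((Wst (ZMod p)).ΨSq (p : ℤ)).natDegree < p ^ 2)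
  have hmonic : (sigmaP p).Monic := by
    have h1 : ((Wst (ZMod p)).Φ (p : ℤ)).Monic := leadingCoeff_Φ _ _
    exact (h1.map Polynomial.C).sub_of_left hlt
  have hdeg : (sigmaP p).natDegree = p ^ 2 := by
    rw [sigmaP, natDegree_eq_of_degree_eq (degree_sub_eq_left_of_degree_lt hlt),
      natDegree_map_eq_of_injective Polynomial.C_injective, natDegree_Φ, Int.natAbs_natCast]
  refine ⟨contract p (sigmaP p), ?_, ?_, ?_, ?_⟩
  · rwa [← monic_expand_iff (Nat.pos_of_ne_zero hp), hexp]
  · have h := natDegree_expand p (contract p (sigmaP p))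
    rw [hexp, hdeg, sq] at h
    exact (Nat.eq_of_mul_eq_mul_right (Nat.pos_of_ne_zero hp) h).symm
  · rw [← expand_eq_comp_X_pow, hexp]
  · intro i hi hip
    refine ⟨((Wst (ZMod p)).Φ (p : ℤ)).coeff ((p - i) * p),
      -((Wst (ZMod p)).ΨSq (p : ℤ)).coeff ((p - i) * p), ?_, ?_, ?_⟩
    · have h := EtaAux.HH_Phi (R := ZMod p) (p - 1)
      rw [show ((p - 1 : ℕ) : ℤ) + 1 = p by omega] at h
      refine h.coeff _ _ ?_
      push_cast [hip]
      ring
    · have h := (EtaAux.HH_PsiSq (R := ZMod p) p).neg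
      rw [← coeff_neg]
      refine h.coeff _ _ ?_
      have : 1 ≤ p * i := Nat.mul_pos (by omega) hi
      push_cast [hip, this]
      ring
    · rw [coeff_contract hp, sigmaP, coeff_sub, coeff_C_mul, coeff_map, coeff_map, C_neg]
      ring
end
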